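/- arXiv:1910.09829 — 7 statements merged into one kernel-verified Lean document; each statement's English description precedes it below -/
import Mathlib

section
/- There exists an LSTS TS (with one atomic proposition) and a weak stubborn set r (a reduction function satisfying D1, D2w, V, I and L at every state, with finite reduced LSTS) such that the reduced LSTS TS_r is not stutter-trace equivalent to TS; hence weak stubborn sets with condition D1 do not in general preserve stutter-trace equivalence. -/
open scoped Classical

/-- The subsequence of an `Option`-valued sequence consisting of the values at the
indices satisfying `P`, in increasing order (`none` past the end when only finitely
many indices satisfy `P`). -/
noncomputable def subseq {α : Type*} (g : ℕ → Option α) (P : ℕ → Prop) : ℕ → Option α :=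
  fun k => if {i | P i}.Infinite ∨ k < {i | P i}.ncard then g (Nat.nth P k) else none

/-- The no-stutter trace of a sequence of labels (`none` marking positions past the end
of a finite sequence): the subsequence of those values at indices `i` such that `i = 0`
or the value differs from the one at `i - 1`. -/
noncomputable def nsTrace {α : Type*} (g : ℕ → Option α) : ℕ → Option α :=
  subseq g fun i => (g i).isSome ∧ (i = 0 ∨ g i ≠ g (i - 1))

/-- A (finite or infinite) path of a transition relation `Tr`.  `len` is the number of
transitions (`⊤` for an infinite path); the values of `states` and `acts` beyond the
length are irrelevant junk. -/
structure TPath {S : Type*} {A : Type*} (Tr : S → A → S → Prop) where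
  states : ℕ → S
  acts : ℕ → A
  len : ℕ∞
  valid : ∀ i : ℕ, (i : ℕ∞) < len → Tr (states i) (acts i) (states (i + 1))

/-- The sequence of state labels along a path (`none` beyond the end). -/
noncomputable def TPath.labelSeq {S A l : Type*}
    {Tr : S → A → S → Prop} (p : TPath Tr) (L : S → Set l) : ℕ → Option (Set l) :=
  fun i => if (i : ℕ∞) ≤ p.len then some (L (p.states i)) else none

/-- The sequence of actions along a path (`none` beyond the end). -/
noncomputable def TPath.actSeq {S A : Type*}
    {Tr : S → A → S → Prop} (p : TPath Tr) : ℕ → Option A :=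
  fun i => if (i : ℕ∞) < p.len then some (p.acts i) else none

/-- Stutter equivalence of two paths with respect to labellings `L₁`, `L₂`:
both are finite or both are infinite, and they have the same no-stutter trace. -/
def StutterEquiv {S₁ A₁ S₂ A₂ l : Type*}
    {Tr₁ : S₁ → A₁ → S₁ → Prop} {Tr₂ : S₂ → A₂ → S₂ → Prop}
    (L₁ : S₁ → Set l) (L₂ : S₂ → Set l) (p : TPath Tr₁) (q : TPath Tr₂) : Prop :=
  (p.len = ⊤ ↔ q.len = ⊤) ∧ nsTrace (p.labelSeq L₁) = nsTrace (q.labelSeq L₂)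

/-- Weak equivalence of two paths with respect to a set `I` of invisible actions:
both are finite or both are infinite, and the projections of their action sequences
onto the visible actions (those not in `I`) are equal. -/
def WeakEquiv {S₁ S₂ A : Type*}
    {Tr₁ : S₁ → A → S₁ → Prop} {Tr₂ : S₂ → A → S₂ → Prop}
    (I : Set A) (p : TPath Tr₁) (q : TPath Tr₂) : Prop :=
  (p.len = ⊤ ↔ q.len = ⊤) ∧
    subseq p.actSeq (fun i => (i : ℕ∞) < p.len ∧ p.acts i ∉ I) =
      subseq q.actSeq (fun i => (i : ℕ∞) < q.len ∧ q.acts i ∉ I)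

/-- A finite run of length `n` along `Tr`: `σ 0 -α 0→ σ 1 -α 1→ ⋯ -α (n-1)→ σ n`. -/
def FinRun {S A : Type*} (Tr : S → A → S → Prop) (n : ℕ) (σ : ℕ → S) (α : ℕ → A) : Prop :=
  ∀ i < n, Tr (σ i) (α i) (σ (i + 1))

/-- `a` is a key action in `s` w.r.t. the reduction function `r`: for all
`a₁, …, aₙ ∉ r s` and paths `s -a₁…aₙ→ s'`, the action `a` is enabled in `s'`. -/
def KeyAction {S A : Type*} (Tr : S → A → S → Prop) (r : S → Set A) (s : S) (a : A) : Prop :=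
  ∀ (n : ℕ) (σ : ℕ → S) (α : ℕ → A), σ 0 = s → FinRun Tr n σ α →
    (∀ i < n, α i ∉ r s) → ∃ t, Tr (σ n) a t

/-- Condition D0: if some action is enabled in `s`, then `r s` contains an enabled action. -/
def CondD0 {S A : Type*} (Tr : S → A → S → Prop) (r : S → Set A) (s : S) : Prop :=
  (∃ a t, Tr s a t) → ∃ a ∈ r s, ∃ t, Tr s a t

/-- Condition D1. -/
def CondD1 {S A : Type*} (Tr : S → A → S → Prop) (r : S → Set A) (s : S) : Prop :=
  ∀ a ∈ r s, ∀ (n : ℕ) (σ : ℕ → S) (α : ℕ → A) (sn' : S),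
    σ 0 = s → FinRun Tr n σ α → (∀ i < n, α i ∉ r s) → Tr (σ n) a sn' →
    ∃ σ' : ℕ → S, Tr s a (σ' 0) ∧ FinRun Tr n σ' α ∧ σ' n = sn'

/-- Condition D1' (strengthened D1): additionally, if `a` is invisible then
`sᵢ -a→ s'ᵢ` for every `1 ≤ i < n`. -/
def CondD1' {S A : Type*} (Tr : S → A → S → Prop) (I : Set A) (r : S → Set A) (s : S) : Prop :=
  ∀ a ∈ r s, ∀ (n : ℕ) (σ : ℕ → S) (α : ℕ → A) (sn' : S),
    σ 0 = s → FinRun Tr n σ α → (∀ i < n, α i ∉ r s) → Tr (σ n) a sn' →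
    ∃ σ' : ℕ → S, Tr s a (σ' 0) ∧ FinRun Tr n σ' α ∧ σ' n = sn' ∧
      (a ∈ I → ∀ i, 1 ≤ i → i < n → Tr (σ i) a (σ' i))

/-- Condition D2: every enabled action of `r s` is a key action in `s`. -/
def CondD2 {S A : Type*} (Tr : S → A → S → Prop) (r : S → Set A) (s : S) : Prop :=
  ∀ a ∈ r s, (∃ t, Tr s a t) → KeyAction Tr r s a

/-- Condition D2w: if some action is enabled in `s`, then `r s` contains a key action. -/
def CondD2w {S A : Type*} (Tr : S → A → S → Prop) (r : S → Set A) (s : S) : Prop :=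
  (∃ a t, Tr s a t) → ∃ a ∈ r s, KeyAction Tr r s a

/-- Condition V: if `r s` contains an enabled visible action, it contains all visible
actions. -/
def CondV {S A : Type*} (Tr : S → A → S → Prop) (I : Set A) (r : S → Set A) (s : S) : Prop :=
  (∃ a ∈ r s, a ∉ I ∧ ∃ t, Tr s a t) → ∀ a, a ∉ I → a ∈ r s

/-- Condition I: if an invisible action is enabled in `s`, then `r s` contains an
invisible key action. -/
def CondI {S A : Type*} (Tr : S → A → S → Prop) (I : Set A) (r : S → Set A) (s : S) : Prop :=
  (∃ a ∈ I, ∃ t, Tr s a t) → ∃ a ∈ r s, a ∈ I ∧ KeyAction Tr r s a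

/-- The states of the reduced LSTS: the smallest set of states containing the initial
state `s0` and closed under transitions labelled with actions of the stubborn set. -/
inductive RedReach {S A : Type*} (Tr : S → A → S → Prop) (r : S → Set A) (s0 : S) : S → Prop
  | refl : RedReach Tr r s0 s0
  | step {s a t} : RedReach Tr r s0 s → a ∈ r s → Tr s a t → RedReach Tr r s0 t

/-- The transition relation of the reduced LSTS. -/
def RedTr {S A : Type*} (Tr : S → A → S → Prop) (r : S → Set A) (s0 : S) :
    S → A → S → Prop :=
  fun s a t => RedReach Tr r s0 s ∧ a ∈ r s ∧ Tr s a t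

/-- Condition L: for every visible action `a`, every cycle in the reduced LSTS
contains a state `s` with `a ∈ r s`. -/
def CondL {S A : Type*} (Tr : S → A → S → Prop) (I : Set A) (r : S → Set A) (s0 : S) : Prop :=
  ∀ a ∉ I, ∀ (n : ℕ) (σ : ℕ → S) (α : ℕ → A), 0 < n →
    FinRun (RedTr Tr r s0) n σ α → σ n = σ 0 → ∃ i < n, a ∈ r (σ i)

/-- Condition C4: either `r s` consists of all actions, or `r s` contains precisely one
enabled action. -/
def CondC4 {S A : Type*} (Tr : S → A → S → Prop) (r : S → Set A) (s : S) : Prop :=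
  r s = Set.univ ∨ ∃! a, a ∈ r s ∧ ∃ t, Tr s a t

/-- `I` is a set of invisible actions w.r.t. the labelling `L`. -/
def InvisibleSet {S A l : Type*} (Tr : S → A → S → Prop) (L : S → Set l) (I : Set A) : Prop :=
  ∀ a ∈ I, ∀ s t, Tr s a t → L s = L t

/-- Reachability along `Tr`. -/
inductive Reach {S A : Type*} (Tr : S → A → S → Prop) (s0 : S) : S → Prop
  | refl : Reach Tr s0 s0
  | step {s a t} : Reach Tr s0 s → Tr s a t → Reach Tr s0 t

/-- Stutter-trace equivalence of two systems: for every initial path of the one there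
is a stutter equivalent initial path of the other, and vice versa. -/
def StutterTraceEquiv {S₁ A₁ S₂ A₂ l : Type*} (Tr₁ : S₁ → A₁ → S₁ → Prop) (i₁ : S₁)
    (L₁ : S₁ → Set l) (Tr₂ : S₂ → A₂ → S₂ → Prop) (i₂ : S₂) (L₂ : S₂ → Set l) : Prop :=
  (∀ p : TPath Tr₁, p.states 0 = i₁ →
      ∃ q : TPath Tr₂, q.states 0 = i₂ ∧ StutterEquiv L₁ L₂ p q) ∧
  (∀ q : TPath Tr₂, q.states 0 = i₂ →
      ∃ p : TPath Tr₁, p.states 0 = i₁ ∧ StutterEquiv L₁ L₂ p q)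

/-- Weak-trace equivalence of two systems with the same set `I` of invisible actions. -/
def WeakTraceEquiv {S₁ S₂ A : Type*} (Tr₁ : S₁ → A → S₁ → Prop) (i₁ : S₁)
    (Tr₂ : S₂ → A → S₂ → Prop) (i₂ : S₂) (I : Set A) : Prop :=
  (∀ p : TPath Tr₁, p.states 0 = i₁ → ∃ q : TPath Tr₂, q.states 0 = i₂ ∧ WeakEquiv I p q) ∧
  (∀ q : TPath Tr₂, q.states 0 = i₂ → ∃ p : TPath Tr₁, p.states 0 = i₁ ∧ WeakEquiv I p q)

/-- An LSTS is labelled consistently iff any two weakly equivalent paths starting in a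
common state are stutter equivalent. -/
def LabelledConsistently {S A l : Type*} (Tr : S → A → S → Prop) (L : S → Set l)
    (I : Set A) : Prop :=
  ∀ p q : TPath Tr, p.states 0 = q.states 0 → WeakEquiv I p q → StutterEquiv L L p q

/-- Label sequence of an explicitly given finite run with `n` transitions. -/
noncomputable def finLabelSeq {S l : Type*} (L : S → Set l) (n : ℕ) (σ : ℕ → S) :
    ℕ → Option (Set l) :=
  fun i => if i ≤ n then some (L (σ i)) else none

/-- Stutter equivalence of two explicitly given finite runs (with `n`, resp. `m`,
transitions); both are finite, so it only requires equality of no-stutter traces. -/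
def FinStutterEquiv {S l : Type*} (L : S → Set l) (n : ℕ) (σ : ℕ → S) (m : ℕ)
    (τ : ℕ → S) : Prop :=
  nsTrace (finLabelSeq L n σ) = nsTrace (finLabelSeq L m τ)

/-- Stutter equivalence of two explicitly given infinite runs; both are infinite, so it
only requires equality of no-stutter traces. -/
def InfStutterEquiv {S l : Type*} (L : S → Set l) (σ τ : ℕ → S) : Prop :=
  nsTrace (fun i => some (L (σ i))) = nsTrace (fun i => some (L (τ i)))

/-- States of the counterexample. -/
inductive CexState
  | s0 | s1 | s2 | u | t | v

/-- Transitions of the counterexample; `false` is the invisible action, `true` the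
visible one. -/
inductive CexTr : CexState → Bool → CexState → Prop
  | b01 : CexTr .s0 true .s1
  | b12 : CexTr .s1 true .s2
  | a0u : CexTr .s0 false .u
  | a0v : CexTr .s0 false .v
  | a1t : CexTr .s1 false .t
  | a2v : CexTr .s2 false .v
  | but : CexTr .u true .t
  | bvv : CexTr .v true .v

/-- Labelling of the counterexample. -/
def cexL : CexState → Set Unit
  | .s1 => Set.univ
  | .t => Set.univ
  | _ => ∅

/-- Reduction function of the counterexample. -/
def cexR : CexState → Set Bool
  | .s0 => {false}
  | _ => Set.univ

theorem cexR_univ {s : CexState} (h : s ≠ .s0) : cexR s = Set.univ := by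
  cases s <;> simp_all [cexR]

theorem cex_runs (n : ℕ) (σ : ℕ → CexState) (α : ℕ → Bool) (h0 : σ 0 = .s0)
    (hr : FinRun CexTr n σ α) (hα : ∀ i < n, α i ∉ cexR .s0) :
    (∀ i < n, α i = true) ∧
    ((n = 0 ∧ σ n = .s0) ∨ (n = 1 ∧ σ n = .s1) ∨ (n = 2 ∧ σ n = .s2)) := by
  have ht : ∀ i < n, α i = true := fun i hi => by
    have := hα i hi
    simpa [cexR] using this
  refine ⟨ht, ?_⟩
  have step : ∀ i < n, CexTr (σ i) true (σ (i + 1)) := fun i hi => by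
    have := hr i hi
    rwa [ht i hi] at this
  have e1 : 0 < n → σ 1 = .s1 := fun hn => by
    have h := step 0 hn
    rw [h0] at h
    generalize σ (0 + 1) = x at h
    cases h; rfl
  have e2 : 1 < n → σ 2 = .s2 := fun hn => by
    have h := step 1 hn
    rw [e1 (by omega)] at h
    generalize σ (1 + 1) = x at h
    cases h; rfl
  have e3 : ¬ 2 < n := fun hn => by
    have h := step 2 hn
    rw [e2 (by omega)] at h
    generalize σ (2 + 1) = x at h
    cases h
  obtain rfl | rfl | rfl : n = 0 ∨ n = 1 ∨ n = 2 := by omega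
  · exact Or.inl ⟨rfl, h0⟩
  · exact Or.inr (Or.inl ⟨rfl, e1 (by omega)⟩)
  · exact Or.inr (Or.inr ⟨rfl, e2 (by omega)⟩)

theorem cex_key0 : KeyAction CexTr cexR .s0 false := by
  intro n σ α h0 hr hα
  obtain ⟨-, ⟨-, h⟩ | ⟨-, h⟩ | ⟨-, h⟩⟩ := cex_runs n σ α h0 hr hα
  · exact ⟨_, h ▸ CexTr.a0u⟩
  · exact ⟨_, h ▸ CexTr.a1t⟩
  · exact ⟨_, h ▸ CexTr.a2v⟩

theorem cex_D1_0 : CondD1 CexTr cexR .s0 := by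
  intro a ha n σ α x h0 hr hα hx
  obtain rfl : a = false := by simpa [cexR] using ha
  obtain ⟨ht, ⟨rfl, h⟩ | ⟨rfl, h⟩ | ⟨rfl, h⟩⟩ := cex_runs n σ α h0 hr hα
  · rw [h] at hx
    exact ⟨fun _ => x, hx, fun i hi => absurd hi (by omega), rfl⟩
  · rw [h] at hx
    cases hx
    refine ⟨fun i => if i = 0 then .u else .t, by simpa using CexTr.a0u, ?_, by simp⟩
    intro i hi
    rw [ht i hi]
    obtain rfl : i = 0 := by omega
    simpa using CexTr.but
  · rw [h] at hx
    cases hx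
    refine ⟨fun _ => .v, CexTr.a0v, ?_, rfl⟩
    intro i hi
    rw [ht i hi]
    exact CexTr.bvv

theorem key_of_univ {s t : CexState} {a : Bool} (h : cexR s = Set.univ) (ht : CexTr s a t) :
    KeyAction CexTr cexR s a := by
  intro n σ α h0 hr hα
  have hn : n = 0 := by
    by_contra hn
    exact hα 0 (by omega) (by simp [h])
  subst hn
  exact ⟨t, h0 ▸ ht⟩

theorem cex_no_in {s t : CexState} {a : Bool} (h : CexTr s a t) : t ≠ .s0 := by
  cases h <;> simp

theorem cex_redReach {s : CexState} (h : RedReach CexTr cexR .s0 s) : s ≠ .s1 ∧ s ≠ .s2 := by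
  induction h with
  | refl => simp
  | step _ ha ht ih => cases ht <;> simp_all [cexR]

theorem cex_change {s t : CexState} {a : Bool} (h : RedTr CexTr cexR .s0 s a t)
    (hl : cexL s ≠ cexL t) : s = .u := by
  obtain ⟨hs, ha, ht⟩ := h
  have := cex_redReach hs
  cases ht <;> simp_all [cexR, cexL]

theorem cex_to_u {s : CexState} {a : Bool} (h : CexTr s a .u) : s = .s0 := by
  cases h; rfl

theorem cex_trace_none (p : TPath (RedTr CexTr cexR .s0)) (hp : p.states 0 = .s0) :
    nsTrace (p.labelSeq cexL) 2 = none := by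
  have hsub : {i | ((p.labelSeq cexL) i).isSome ∧
      (i = 0 ∨ (p.labelSeq cexL) i ≠ (p.labelSeq cexL) (i - 1))} ⊆ (({0, 2} : Finset ℕ) : Set ℕ) := by
    rintro i ⟨hi, h⟩
    rcases i with _ | j
    · simp
    have hlen : ((j + 1 : ℕ) : ℕ∞) ≤ p.len := by
      by_contra hc
      simp only [TPath.labelSeq, if_neg hc] at hi
      simp at hi
    have hj : (j : ℕ∞) < p.len := lt_of_lt_of_le (by exact_mod_cast Nat.lt_succ_self j) hlen
    have hne : cexL (p.states j) ≠ cexL (p.states (j + 1)) := by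
      intro he
      rcases h with h | h
      · omega
      · apply h
        simp only [TPath.labelSeq, if_pos hlen, Nat.add_sub_cancel, if_pos hj.le, he]
    have hu := cex_change (p.valid j hj) hne
    rcases j with _ | k
    · rw [hp] at hu; cases hu
    have hk : (k : ℕ∞) < p.len := lt_trans (by exact_mod_cast Nat.lt_succ_self k) hj
    have h2 := (p.valid k hk).2.2
    rw [hu] at h2
    have h3 := cex_to_u h2
    rcases k with _ | m
    · simp
    have hm : (m : ℕ∞) < p.len := lt_trans (by exact_mod_cast Nat.lt_succ_self m) hk
    exact absurd h3 (cex_no_in (p.valid m hm).2.2)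
  have hfin := (Finset.finite_toSet ({0, 2} : Finset ℕ)).subset hsub
  have hcard := Set.ncard_le_ncard hsub (Finset.finite_toSet _)
  rw [Set.ncard_coe_finset] at hcard
  have h2 : ({0, 2} : Finset ℕ).card = 2 := by decide
  unfold nsTrace subseq
  rw [if_neg]
  rintro (h | h)
  · exact h hfin
  · exact absurd (lt_of_lt_of_le h hcard) (by omega)

/-- The path `s0 → s1 → s2` of the full system. -/
def cexPath : TPath CexTr where
  states := fun i => if i = 0 then .s0 else if i = 1 then .s1 else .s2
  acts := fun _ => true
  len := 2
  valid := by
    intro i hi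
    have hi' : i < 2 := by exact_mod_cast hi
    obtain rfl | rfl : i = 0 ∨ i = 1 := by omega
    · simpa using CexTr.b01
    · simpa using CexTr.b12

theorem cexPath_trace : (nsTrace (cexPath.labelSeq cexL) 2).isSome := by
  have e : ∀ i : ℕ, i ≤ 2 → cexPath.labelSeq cexL i = some (cexL (cexPath.states i)) := by
    intro i hi
    have : (i : ℕ∞) ≤ cexPath.len := by
      change (i : ℕ∞) ≤ 2
      exact_mod_cast hi
    simp only [TPath.labelSeq, if_pos this]
  have hsub : (({0, 1, 2} : Finset ℕ) : Set ℕ) ⊆ {i | ((cexPath.labelSeq cexL) i).isSome ∧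
      (i = 0 ∨ (cexPath.labelSeq cexL) i ≠ (cexPath.labelSeq cexL) (i - 1))} := by
    intro i hi
    have hi' : i = 0 ∨ i = 1 ∨ i = 2 := by simpa using hi
    rcases hi' with rfl | rfl | rfl
    · simp [e]
    · have h0 : cexPath.states 0 = .s0 := rfl
      have h1 : cexPath.states 1 = .s1 := rfl
      simp [e, h0, h1, cexL]
    · have h1 : cexPath.states 1 = .s1 := rfl
      have h2 : cexPath.states 2 = .s2 := rfl
      simp [e, h1, h2, cexL, Set.empty_ne_univ]
  have h3 : ({0, 1, 2} : Finset ℕ).card = 3 := by decide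
  have hc : ∀ hf : {i | ((cexPath.labelSeq cexL) i).isSome ∧
      (i = 0 ∨ (cexPath.labelSeq cexL) i ≠ (cexPath.labelSeq cexL) (i - 1))}.Finite,
      2 < hf.toFinset.card := by
    intro hf
    have := Set.ncard_le_ncard hsub hf
    rw [Set.ncard_coe_finset, Set.ncard_eq_toFinset_card _ hf] at this
    omega
  have hmem := Nat.nth_mem 2 hc
  unfold nsTrace subseq
  rw [if_pos]
  · exact hmem.1
  · by_cases hf : {i | ((cexPath.labelSeq cexL) i).isSome ∧
      (i = 0 ∨ (cexPath.labelSeq cexL) i ≠ (cexPath.labelSeq cexL) (i - 1))}.Finite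
    · right
      rw [Set.ncard_eq_toFinset_card _ hf]
      exact hc hf
    · exact Or.inl hf

/-- There exists an LSTS `TS` (with one atomic proposition) and a weak
stubborn set `r` (a reduction function satisfying D1, D2w, V, I and L at every state,
with finite reduced LSTS) such that the reduced LSTS `TS_r` is not stutter-trace
equivalent to `TS`. -/
theorem weak_stubborn_sets_with_D1_do_not_preserve_stutter_trace_equivalence :
    ∃ (S A : Type) (Tr : S → A → S → Prop) (s0 : S) (L : S → Set Unit) (I : Set A)
      (r : S → Set A),
      InvisibleSet Tr L I ∧
      (∀ s, CondD1 Tr r s ∧ CondD2w Tr r s ∧ CondV Tr I r s ∧ CondI Tr I r s) ∧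
      CondL Tr I r s0 ∧
      {s | RedReach Tr r s0 s}.Finite ∧
      ¬ StutterTraceEquiv (RedTr Tr r s0) s0 L Tr s0 L := by
  refine ⟨CexState, Bool, CexTr, .s0, cexL, {false}, cexR, ?_, ?_, ?_, ?_, ?_⟩
  · intro a ha s t h
    cases h <;> simp_all [cexL]
  · intro s
    by_cases hs : s = .s0
    · subst hs
      refine ⟨cex_D1_0, fun _ => ⟨false, rfl, cex_key0⟩, ?_, fun _ => ⟨false, rfl, rfl, cex_key0⟩⟩
      rintro ⟨a, ha, hb, -⟩
      exact absurd ha hb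
    · have hu := cexR_univ hs
      refine ⟨?_, ?_, ?_, ?_⟩
      · intro a ha n σ α x h0 hr hα hx
        have hn : n = 0 := by
          by_contra hn
          exact hα 0 (by omega) (by simp [hu])
        subst hn
        exact ⟨fun _ => x, h0 ▸ hx, fun i hi => absurd hi (by omega), rfl⟩
      · rintro ⟨a, t, h⟩
        exact ⟨a, by simp [hu], key_of_univ hu h⟩
      · intro _ a _
        simp [hu]
      · rintro ⟨a, ha, t, h⟩
        exact ⟨a, by simp [hu], ha, key_of_univ hu h⟩
  · intro a ha n σ α hn hr hc
    refine ⟨0, hn, ?_⟩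
    obtain ⟨m, rfl⟩ : ∃ m, n = m + 1 := ⟨n - 1, by omega⟩
    have h := cex_no_in (hr m (by omega)).2.2
    rw [hc] at h
    simp [cexR_univ h]
  · refine (Set.toFinite ({.s0, .s1, .s2, .u, .t, .v} : Set CexState)).subset ?_
    intro s _
    cases s <;> simp
  · rintro ⟨-, h⟩
    obtain ⟨p, hp, -, he⟩ := h cexPath rfl
    have h1 := cex_trace_none p hp
    have h2 := cexPath_trace
    rw [← he, h1] at h2
    simp at h2
end

section
/- Let r be a weak stubborn set (satisfying D1', D2w, V, I, L) on an LSTS and let π = s0 -a1→ … -an→ sn -a→ s'n be a path such that a1,…,an ∉ r(s0) and a ∈ r(s0). Then there is a path π' = s0 -a→ s'0 -a1→ … -an→ s'n, whose first transition is in the reduced LSTS when s0 is a state of the reduced LSTS, such that π and π' are stutter equivalent. -/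
open scoped Classical

theorem nsTrace_stretch {β : Type*} (g g' : ℕ → Option β) (ψ : ℕ → ℕ) (hψ : StrictMono ψ)
    (h0 : ψ 0 = 0) (h1 : ∀ j, g' (ψ j) = g j) (h2 : ∀ j, g' (ψ (j + 1) - 1) = g j)
    (h3 : ∀ i, i ∉ Set.range ψ → g' i = g' (i - 1)) : nsTrace g' = nsTrace g := by
  set P : ℕ → Prop := fun i => (g i).isSome ∧ (i = 0 ∨ g i ≠ g (i - 1)) with hP
  set P' : ℕ → Prop := fun i => (g' i).isSome ∧ (i = 0 ∨ g' i ≠ g' (i - 1)) with hP'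
  have hr : ∀ k, P' k → k ∈ Set.range ψ := by
    intro k hk
    by_contra hc
    rcases hk.2 with h | h
    · exact hc ⟨0, by omega⟩
    · exact h (h3 k hc)
  have hc : ∀ j, P' (ψ j) ↔ P j := by
    intro j
    simp only [hP, hP', h1]
    rcases j with _ | j
    · simp [h0]
    · have : ψ (j + 1) ≠ 0 := by
        have := hψ (Nat.succ_pos j)
        simp only [Nat.succ_eq_add_one] at this
        omega
      simp [this, h2]
  have hc' : (fun j => P' (ψ j)) = P := funext fun j => propext (hc j)
  have himg : {i | P' i} = ψ '' {i | P i} := by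
    ext i
    constructor
    · intro hi
      obtain ⟨j, rfl⟩ := hr i hi
      exact ⟨j, (hc j).1 hi, rfl⟩
    · rintro ⟨j, hj, rfl⟩
      exact (hc j).2 hj
  have hinf : {i | P' i}.Infinite ↔ {i | P i}.Infinite := by
    rw [himg]
    exact Set.infinite_image_iff hψ.injective.injOn
  have hcard : {i | P' i}.ncard = {i | P i}.ncard := by
    rw [himg]
    exact Set.ncard_image_of_injective _ hψ.injective
  funext k
  change subseq g' P' k = subseq g P k
  unfold subseq
  rw [hcard]
  simp only [hinf]
  split_ifs with h
  · have := Nat.nth_comp_of_strictMono (p := P') (n := k) hψ hr (by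
      intro hfi
      rcases h with h | h
      · exact absurd hfi (hinf.2 h)
      · rwa [← Set.ncard_eq_toFinset_card _ hfi, hcard])
    rw [hc'] at this
    rw [← this, h1]
  · rfl

/-- Lemma "shift action forward": Let `r` be a weak stubborn set
(satisfying D1', D2w, V, I, L) on an LSTS and let `π = σ 0 -α 0→ … -α (n-1)→ σ n -a→ sn'`
be a path such that `α 0, …, α (n-1) ∉ r (σ 0)` and `a ∈ r (σ 0)`.  Then there is a path
`π' = σ 0 -a→ σ' 0 -α 0→ … -α (n-1)→ σ' n` with `σ' n = sn'`, whose first transition is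
in the reduced LSTS when `σ 0` is a state of the reduced LSTS, such that `π` and `π'`
are stutter equivalent. -/
theorem shift_action_forward {S A l : Type*} (Tr : S → A → S → Prop) (s0 : S)
    (L : S → Set l) (I : Set A) (hI : InvisibleSet Tr L I) (r : S → Set A)
    (hstub : ∀ s, CondD1' Tr I r s ∧ CondD2w Tr r s ∧ CondV Tr I r s ∧ CondI Tr I r s)
    (hcondL : CondL Tr I r s0)
    (n : ℕ) (σ : ℕ → S) (α : ℕ → A) (a : A) (sn' : S)
    (hrun : FinRun Tr n σ α) (hnr : ∀ i < n, α i ∉ r (σ 0)) (ha : a ∈ r (σ 0))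
    (hlast : Tr (σ n) a sn') :
    ∃ σ' : ℕ → S, Tr (σ 0) a (σ' 0) ∧ FinRun Tr n σ' α ∧ σ' n = sn' ∧
      (RedReach Tr r s0 (σ 0) → RedTr Tr r s0 (σ 0) a (σ' 0)) ∧
      FinStutterEquiv L (n + 1) (fun i => if i ≤ n then σ i else sn')
        (n + 1) (fun i => if i = 0 then σ 0 else σ' (i - 1)) := by
  obtain ⟨σ', h1, h2, h3, h4⟩ := (hstub (σ 0)).1 a ha n σ α sn' rfl hrun hnr hlast
  refine ⟨σ', h1, h2, h3, fun h => ⟨h, ha, h1⟩, ?_⟩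
  unfold FinStutterEquiv
  by_cases haI : a ∈ I
  · have hL : ∀ i ≤ n, L (σ' i) = L (σ i) := by
      intro i hi
      rcases Nat.eq_zero_or_pos i with rfl | hpos
      · exact (hI a haI _ _ h1).symm
      · rcases Nat.lt_or_ge i n with hlt | hge
        · exact (hI a haI _ _ (h4 haI i hpos hlt)).symm
        · obtain rfl : i = n := by omega
          rw [h3]
          exact (hI a haI _ _ hlast).symm
    have hLn : L sn' = L (σ n) := (hI a haI _ _ hlast).symm
    trans nsTrace (finLabelSeq L n σ)
    · apply nsTrace_stretch _ _ (fun i => if i ≤ n then i else i + 1)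
      · intro i j hij
        dsimp only
        split_ifs <;> omega
      · simp
      · intro j
        unfold finLabelSeq
        by_cases hj : j ≤ n
        · simp [hj, Nat.le_succ_of_le hj]
        · simp [hj]
      · intro j
        unfold finLabelSeq
        by_cases hj : j + 1 ≤ n
        · simp [hj, show j ≤ n by omega, show j ≤ n + 1 by omega]
        · by_cases hjn : j = n
          · subst hjn
            simp [hLn]
          · simp [hj, show ¬ j ≤ n by omega]
      · intro i hi
        have : i = n + 1 := by
          by_contra hne
          apply hi
          by_cases h : i ≤ n
          · exact ⟨i, by simp [h]⟩
          · exact ⟨i - 1, by dsimp only; split_ifs <;> omega⟩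
        subst this
        simp [finLabelSeq, hLn]
    · symm
      apply nsTrace_stretch _ _ (fun i => if i = 0 then 0 else i + 1)
      · intro i j hij
        dsimp only
        split_ifs <;> omega
      · simp
      · intro j
        unfold finLabelSeq
        by_cases hj0 : j = 0
        · simp [hj0]
        · by_cases hj : j ≤ n
          · simp [hj, hj0, hL]
          · simp [hj, hj0]
      · intro j
        unfold finLabelSeq
        by_cases hj : j ≤ n
        · simp [hj, hL]
        · simp [hj]
      · intro i hi
        have : i = 1 := by
          by_contra hne
          apply hi
          by_cases h : i = 0
          · exact ⟨0, by simp [h]⟩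
          · exact ⟨i - 1, by dsimp only; split_ifs <;> omega⟩
        subst this
        simp [finLabelSeq, hL]
  · have hV := (hstub (σ 0)).2.2.1 ⟨a, ha, haI, _, h1⟩
    have hinv : ∀ i < n, α i ∈ I := fun i hi => by
      by_contra hc
      exact hnr i hi (hV _ hc)
    have hx : ∀ i ≤ n, L (σ i) = L (σ 0) := by
      intro i
      induction i with
      | zero => intro _; rfl
      | succ i ih =>
        intro hi
        rw [← hI _ (hinv i hi) _ _ (hrun i hi)]
        exact ih (by omega)
    have hy' : ∀ i ≤ n, L (σ' i) = L (σ' 0) := by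
      intro i
      induction i with
      | zero => intro _; rfl
      | succ i ih =>
        intro hi
        rw [← hI _ (hinv i hi) _ _ (h2 i hi)]
        exact ih (by omega)
    have hs : L (σ' 0) = L sn' := by rw [← h3]; exact (hy' n le_rfl).symm
    have hy : ∀ i ≤ n, L (σ' i) = L sn' := fun i hi => (hy' i hi).trans hs
    have e1 : finLabelSeq L (n + 1) (fun i => if i ≤ n then σ i else sn') =
        fun i => if i ≤ n then some (L (σ 0)) else if i = n + 1 then some (L sn') else none := by
      funext i
      unfold finLabelSeq
      by_cases h : i ≤ n
      · simp [h, Nat.le_succ_of_le h, hx]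
      · by_cases h' : i = n + 1
        · simp [h']
        · simp [h, h', show ¬ i ≤ n + 1 by omega]
    have e2 : finLabelSeq L (n + 1) (fun i => if i = 0 then σ 0 else σ' (i - 1)) =
        fun i => if i = 0 then some (L (σ 0)) else if i ≤ n + 1 then some (L sn') else none := by
      funext i
      unfold finLabelSeq
      by_cases h : i = 0
      · simp [h]
      · by_cases h' : i ≤ n + 1
        · simp [h, h', hy (i - 1) (by omega)]
        · simp [h, h']
    rw [e1, e2]
    trans nsTrace (fun i => if i = 0 then some (L (σ 0)) else
      if i = 1 then some (L sn') else none)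
    · apply nsTrace_stretch _ _ (fun i => if i = 0 then 0 else i + n)
      · intro i j hij
        dsimp only
        split_ifs <;> omega
      · simp
      · intro j
        try dsimp only
        split_ifs <;> first | rfl | omega
      · intro j
        simp only [Nat.add_eq_zero_iff, one_ne_zero, and_false, if_false]
        split_ifs <;> first | rfl | omega
      · intro i hi
        have : ¬ (i = 0 ∨ n < i) := by
          intro h
          apply hi
          by_cases h : i = 0
          · exact ⟨0, by simp [h]⟩
          · exact ⟨i - n, by dsimp only; split_ifs <;> omega⟩
        try dsimp only
        split_ifs <;> first | rfl | omega
    · symm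
      apply nsTrace_stretch _ _ (fun i => if i ≤ 1 then i else i + n)
      · intro i j hij
        dsimp only
        split_ifs <;> omega
      · simp
      · intro j
        try dsimp only
        split_ifs <;> first | rfl | omega
      · intro j
        try dsimp only
        split_ifs <;> first | rfl | omega
      · intro i hi
        have : ¬ (i ≤ 1 ∨ n + 1 < i) := by
          intro h
          apply hi
          by_cases h : i ≤ 1
          · exact ⟨i, by simp [h]⟩
          · exact ⟨i - n, by dsimp only; split_ifs <;> omega⟩
        try dsimp only
        split_ifs <;> first | rfl | omega
end

section
/- Let r be a weak stubborn set (satisfying D1', D2w, V, I, L) on an LSTS and let π = s0 -a1→ s1 -a2→ … -an→ sn be a finite path of length n > 0 such that ai ∉ r(s0) for every i. Then there exist an action ak, a state s'n with sn -ak→ s'n, and a path π' = s0 -ak→ s'0 -a1→ … -an→ s'n, such that π and π' are stutter equivalent (and the first transition of π' is in the reduced LSTS when s0 is a state of the reduced LSTS). -/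
open scoped Classical

lemma nsTrace_dup {β : Type*} (g h : ℕ → Option β) (h0 : h 0 = g 0)
    (hs : ∀ i, h (i + 1) = g i) : nsTrace g = nsTrace h := by
  let f : ℕ → ℕ := fun i => if i = 0 then 0 else i + 1
  have hf : StrictMono f := by
    intro a b hab
    simp only [f]
    split_ifs <;> omega
  have hgf : ∀ i, h (f i) = g i := by
    intro i
    simp only [f]
    split_ifs with hi
    · rw [hi, h0]
    · exact hs i
  let p : ℕ → Prop := fun i => (h i).isSome ∧ (i = 0 ∨ h i ≠ h (i - 1))
  let q : ℕ → Prop := fun i => (g i).isSome ∧ (i = 0 ∨ g i ≠ g (i - 1))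
  have hpq : (fun i => p (f i)) = q := by
    funext i
    simp only [p, q, hgf]
    rcases i with _ | i
    · simp [f]
    · simp [f, hs]
  have hr : ∀ k, p k → k ∈ Set.range f := by
    intro k hk
    rcases k with _ | _ | k
    · exact ⟨0, by simp [f]⟩
    · exfalso
      rcases hk.2 with hk | hk
      · omega
      · exact hk (by simp [hs, h0])
    · exact ⟨k + 1, by simp [f]⟩
  have himg : {i | p i} = f '' {i | q i} := by
    rw [← hpq]
    ext k
    constructor
    · intro hk
      obtain ⟨j, rfl⟩ := hr k hk
      exact ⟨j, hk, rfl⟩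
    · rintro ⟨j, hj, rfl⟩
      exact hj
  have hinf : {i | p i}.Infinite ↔ {i | q i}.Infinite := by
    rw [himg, Set.infinite_image_iff hf.injective.injOn]
  have hcard : {i | p i}.ncard = {i | q i}.ncard := by
    rw [himg, Set.ncard_image_of_injective _ hf.injective]
  funext k
  change (if {i | q i}.Infinite ∨ k < {i | q i}.ncard then g (Nat.nth q k) else none) =
    (if {i | p i}.Infinite ∨ k < {i | p i}.ncard then h (Nat.nth p k) else none)
  rw [hinf, hcard]
  split_ifs with hc
  · have := Nat.nth_comp_of_strictMono (p := p) (n := k) hf hr (by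
      intro hfi
      rcases hc with hc | hc
      · exact absurd hfi (hinf.2 hc)
      · rw [← Set.ncard_eq_toFinset_card _ hfi]
        exact hcard ▸ hc)
    rw [hpq] at this
    rw [← this, hgf]
  · rfl

/-- Lemma "introduce key action", finite case: Let `r` be a weak stubborn
set (satisfying D1', D2w, V, I, L) on an LSTS and let `π = σ 0 -α 0→ σ 1 -α 1→ … σ n` be
a finite path of length `n > 0` such that `α i ∉ r (σ 0)` for every `i < n`.  Then there
exist an action `ak`, a state `σ' n` with `σ n -ak→ σ' n`, and a path
`π' = σ 0 -ak→ σ' 0 -α 0→ … -α (n-1)→ σ' n`, such that `π` and `π'` are stutter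
equivalent (and the first transition of `π'` is in the reduced LSTS when `σ 0` is a
state of the reduced LSTS). -/
theorem introduce_key_action_finite {S A l : Type*} (Tr : S → A → S → Prop) (s0 : S)
    (L : S → Set l) (I : Set A) (hI : InvisibleSet Tr L I) (r : S → Set A)
    (hstub : ∀ s, CondD1' Tr I r s ∧ CondD2w Tr r s ∧ CondV Tr I r s ∧ CondI Tr I r s)
    (hcondL : CondL Tr I r s0)
    (n : ℕ) (hn : 0 < n) (σ : ℕ → S) (α : ℕ → A)
    (hrun : FinRun Tr n σ α) (hnr : ∀ i < n, α i ∉ r (σ 0)) :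
    ∃ (ak : A) (σ' : ℕ → S),
      Tr (σ n) ak (σ' n) ∧ Tr (σ 0) ak (σ' 0) ∧ FinRun Tr n σ' α ∧
      (RedReach Tr r s0 (σ 0) → RedTr Tr r s0 (σ 0) ak (σ' 0)) ∧
      FinStutterEquiv L n σ (n + 1) (fun i => if i = 0 then σ 0 else σ' (i - 1)) := by
  obtain ⟨hD1, hD2, hV, hCI⟩ := hstub (σ 0)
  have hinv : ∃ a ∈ I, ∃ t, Tr (σ 0) a t := by
    by_contra hno
    have hα : α 0 ∉ I := fun h => hno ⟨α 0, h, _, hrun 0 hn⟩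
    obtain ⟨a, har, hk⟩ := hD2 ⟨α 0, _, hrun 0 hn⟩
    obtain ⟨t, ht⟩ := hk 0 σ α rfl (fun i hi => absurd hi (by omega))
      (fun i hi => absurd hi (by omega))
    have ha : a ∉ I := fun h => hno ⟨a, h, t, ht⟩
    exact hnr 0 hn (hV ⟨a, har, ha, t, ht⟩ _ hα)
  obtain ⟨a, har, haI, hk⟩ := hCI hinv
  obtain ⟨t, ht⟩ := hk n σ α rfl hrun hnr
  obtain ⟨σ', h0, hrun', hend, hmid⟩ := hD1 a har n σ α t rfl hrun hnr ht
  refine ⟨a, σ', hend ▸ ht, h0, hrun', fun hr => ⟨hr, har, h0⟩, ?_⟩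
  have hlab : ∀ i ≤ n, L (σ i) = L (σ' i) := by
    intro i hi
    apply hI a haI
    rcases Nat.eq_zero_or_pos i with rfl | hpos
    · exact h0
    · rcases hi.lt_or_eq with hlt | rfl
      · exact hmid haI i hpos hlt
      · exact hend ▸ ht
  apply nsTrace_dup
  · simp [finLabelSeq]
  · intro i
    by_cases hi : i ≤ n
    · simp [finLabelSeq, hi, hlab i hi]
    · simp [finLabelSeq, hi]
end

section
/- Given an LSTS TS and a weak or strong stubborn set r in which condition D1 is replaced by the strengthened condition D1', and whose reduced LSTS TS_r has finitely many states, the reduced LSTS TS_r is stutter-trace equivalent to TS. -/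
open scoped Classical

namespace StubAux

/-- Destuttered prefix (indices `0..n`) of a sequence. -/
noncomputable def D {α : Type*} (u : ℕ → α) : ℕ → List α
  | 0 => [u 0]
  | n + 1 => if u (n + 1) = u n then D u n else D u n ++ [u (n + 1)]

/-- Prepend `c` unless the list starts with `c`. -/
noncomputable def F {α : Type*} (c : α) (x : List α) : List α :=
  if x.head? = some c then x else c :: x

/-- Prepend an element to a sequence. -/
def consS {α : Type*} (c : α) (u : ℕ → α) : ℕ → α
  | 0 => c
  | n + 1 => u n

theorem D_head {α : Type*} (u : ℕ → α) (n : ℕ) : (D u n).head? = some (u 0) := by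
  induction n with
  | zero => simp [D]
  | succ n ih =>
    simp only [D]
    split_ifs
    · exact ih
    · simp [List.head?_append, ih]

theorem D_ne {α : Type*} (u : ℕ → α) (n : ℕ) : D u n ≠ [] := by
  intro h
  have := D_head u n
  simp [h] at this

theorem F_append {α : Type*} (c : α) (x y : List α) (hx : x ≠ []) :
    F c (x ++ y) = F c x ++ y := by
  cases x with
  | nil => exact absurd rfl hx
  | cons a x => by_cases h : a = c <;> simp [F, h]

theorem F_D {α : Type*} (u : ℕ → α) (n : ℕ) : F (u 0) (D u n) = D u n := by
  simp [F, D_head]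

theorem D_consS {α : Type*} (c : α) (u : ℕ → α) (n : ℕ) :
    D (consS c u) (n + 1) = F c (D u n) := by
  induction n with
  | zero =>
    by_cases h : u 0 = c <;> simp [D, consS, F, h]
  | succ n ih =>
    rw [D, ih]
    simp only [consS, D]
    by_cases h : u (n + 1) = u n
    · simp [h]
    · simp only [h, if_false]
      rw [F_append _ _ _ (D_ne u n)]

theorem D_congr {α : Type*} (u v : ℕ → α) (n : ℕ) (h : ∀ i ≤ n, u i = v i) :
    D u n = D v n := by
  induction n with
  | zero => simp [D, h]
  | succ n ih =>
    simp only [D]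
    rw [ih (fun i hi => h i (by omega)), h (n + 1) le_rfl, h n (by omega)]

theorem D_const {α : Type*} (u : ℕ → α) (n : ℕ) (h : ∀ i ≤ n, u i = u 0) :
    D u n = [u 0] := by
  induction n with
  | zero => simp [D]
  | succ n ih =>
    simp only [D]
    rw [ih (fun i hi => h i (by omega)), h (n + 1) le_rfl, h n (by omega)]
    simp

theorem D_prefix {α : Type*} (u : ℕ → α) {m n : ℕ} (h : m ≤ n) : D u m <+: D u n := by
  induction n, h using Nat.le_induction with
  | base => exact List.prefix_rfl
  | succ n _ ih =>
    simp only [D]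
    split_ifs
    · exact ih
    · exact ih.trans (List.prefix_append _ _)

/-- labels after moving an invisible action at `j` to the front -/
noncomputable def mvI {α : Type*} (j : ℕ) (u : ℕ → α) : ℕ → α :=
  fun i => if i ≤ j then u i else u (i + 1)

/-- labels after moving a visible action at `j` to the front -/
noncomputable def mvV {α : Type*} (j : ℕ) (u : ℕ → α) : ℕ → α :=
  fun i => if i ≤ j then u (j + 1) else u (i + 1)

/-- actions after removing the one at `j` -/
noncomputable def skip {α : Type*} (j : ℕ) (a : ℕ → α) : ℕ → α :=
  fun i => if i < j then a i else a (i + 1)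

theorem D_mvI_ge {α : Type*} (j : ℕ) (u : ℕ → α) (hu : u j = u (j + 1)) (n : ℕ) (hn : j ≤ n) :
    D (mvI j u) n = D u (n + 1) := by
  induction n, hn using Nat.le_induction with
  | base =>
    rw [D_congr (mvI j u) u j (fun i hi => by simp [mvI, hi])]
    simp [D, hu]
  | succ n hn ih =>
    rw [D, D, ih]
    have h1 : mvI j u (n + 1) = u (n + 1 + 1) := by simp [mvI]; omega
    have h2 : mvI j u n = u (n + 1) := by
      rcases eq_or_lt_of_le hn with rfl | h
      · simp [mvI, hu]
      · simp [mvI]; omega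
    rw [h1, h2]

theorem D_mvV_ge {α : Type*} (j : ℕ) (u : ℕ → α) (hu : ∀ i ≤ j, u i = u 0) (n : ℕ) (hn : j ≤ n) :
    F (u 0) (D (mvV j u) n) = D u (n + 1) := by
  induction n, hn using Nat.le_induction with
  | base =>
    rw [D_const (mvV j u) j (fun i hi => by simp [mvV, hi]), D, D_const u j hu, hu j le_rfl]
    by_cases h : u (j + 1) = u 0 <;> simp [F, mvV, h]
  | succ n hn ih =>
    rw [D, D, ← ih]
    have h1 : mvV j u (n + 1) = u (n + 1 + 1) := by simp [mvV]; omega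
    have h2 : mvV j u n = u (n + 1) := by
      rcases eq_or_lt_of_le hn with rfl | h
      · simp [mvV]
      · simp [mvV]; omega
    rw [h1, h2]
    split_ifs
    · rfl
    · rw [F_append _ _ _ (D_ne _ n)]

theorem nsTrace_iff {S A l : Type*} {Tr : S → A → S → Prop} (p : TPath Tr) (L : S → Set l)
    (k : ℕ) (x : Set l) :
    nsTrace (p.labelSeq L) k = some x ↔
      ∃ i : ℕ, (i : ℕ∞) ≤ p.len ∧ (D (fun i => L (p.states i)) i)[k]? = some x := by
  set g := p.labelSeq L with hg
  set u : ℕ → Set l := fun i => L (p.states i) with hu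
  set P : ℕ → Prop := fun i => (g i).isSome ∧ (i = 0 ∨ g i ≠ g (i - 1)) with hP
  have hsome : ∀ i : ℕ, (i : ℕ∞) ≤ p.len → g i = some (u i) := by
    intro i hi; simp [hg, TPath.labelSeq, hi, hu]
  have hnone : ∀ (i : ℕ) x, g i = some x → (i : ℕ∞) ≤ p.len := by
    intro i x hi
    by_contra h
    simp [hg, TPath.labelSeq, h] at hi
  have hpred : ∀ i : ℕ, ((i + 1 : ℕ) : ℕ∞) ≤ p.len → (i : ℕ∞) ≤ p.len := by
    intro i hi
    refine le_trans ?_ hi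
    exact_mod_cast Nat.le_succ i
  have hP0 : P 0 := by
    refine ⟨?_, Or.inl rfl⟩
    rw [hsome 0 (by simp)]; rfl
  have hPs : ∀ i : ℕ, ((i + 1 : ℕ) : ℕ∞) ≤ p.len → (P (i + 1) ↔ u (i + 1) ≠ u i) := by
    intro i hi
    simp only [hP]
    rw [hsome _ hi, Nat.add_sub_cancel, hsome _ (hpred i hi)]
    simp
  have hlen : ∀ i : ℕ, (i : ℕ∞) ≤ p.len → (D u i).length = Nat.count P (i + 1) := by
    intro i
    induction i with
    | zero => intro _; simp [D, Nat.count_succ, hP0]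
    | succ i ih =>
      intro hi
      rw [Nat.count_succ, ← ih (hpred i hi), D]
      by_cases h : u (i + 1) = u i
      · have : ¬ P (i + 1) := by rw [hPs i hi]; simpa using h
        simp [h, this]
      · have : P (i + 1) := by rw [hPs i hi]; simpa using h
        simp [h, this]
  have hD : ∀ i : ℕ, (i : ℕ∞) ≤ p.len → P i → (D u i)[Nat.count P i]? = some (u i) := by
    intro i hi hPi
    cases i with
    | zero => simp [D]
    | succ i =>
      rw [← hlen i (hpred i hi), D, if_neg ((hPs i hi).1 hPi)]
      simp
  have hback : ∀ i : ℕ, (i : ℕ∞) ≤ p.len → ∀ k x, (D u i)[k]? = some x →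
      ∃ i' : ℕ, P i' ∧ Nat.count P i' = k ∧ g i' = some x := by
    intro i
    induction i with
    | zero =>
      intro hi k x h
      cases k with
      | zero =>
        refine ⟨0, hP0, by simp, ?_⟩
        rw [hsome 0 hi]; simpa [D] using h
      | succ k => simp [D] at h
    | succ i ih =>
      intro hi k x h
      rw [D] at h
      by_cases hc : u (i + 1) = u i
      · rw [if_pos hc] at h
        exact ih (hpred i hi) k x h
      · rw [if_neg hc] at h
        by_cases hk : k < (D u i).length
        · rw [List.getElem?_append_left hk] at h
          exact ih (hpred i hi) k x h
        · rw [List.getElem?_append_right (by omega)] at h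
          have hk' : k - (D u i).length = 0 := by
            by_contra h0
            obtain ⟨q, hq⟩ := Nat.exists_eq_succ_of_ne_zero h0
            rw [hq] at h; simp at h
          rw [hk'] at h
          refine ⟨i + 1, (hPs i hi).2 hc, ?_, ?_⟩
          · rw [← hlen i (hpred i hi)]; omega
          · rw [hsome _ hi]; simpa using h
  have hunf : nsTrace g k = if {i | P i}.Infinite ∨ k < {i | P i}.ncard
      then g (Nat.nth P k) else none := rfl
  rw [hunf]
  constructor
  · intro h
    split_ifs at h with hc
    have hcard : ∀ hf : (Set.ofPred P).Finite, k < hf.toFinset.card := by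
      intro hf
      rcases hc with hc | hc
      · exact absurd hf hc
      · exact (Set.ncard_eq_toFinset_card _ hf) ▸ hc
    have h1 := Nat.nth_mem k hcard
    have h2 := Nat.count_nth hcard
    have h3 := hnone _ _ h
    refine ⟨Nat.nth P k, h3, ?_⟩
    have := hD _ h3 h1
    rw [h2] at this
    rw [this, ← hsome _ h3, h]
  · rintro ⟨i, hi, h⟩
    obtain ⟨i', h1, h2, h3⟩ := hback i hi k x h
    rw [if_pos]
    · rw [← h2, Nat.nth_count h1, h3]
    · by_cases hf : {i | P i}.Finite
      · right
        rw [Set.ncard_eq_toFinset_card _ hf, ← h2]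
        exact Nat.count_lt_card hf h1
      · exact Or.inl hf

section
variable {S A l : Type*} (Tr : S → A → S → Prop) (s0 : S) (L : S → Set l) (I : Set A)
  (r : S → Set A)

/-- There is a run from `s` of length `n` with actions `a` and labels `u`. -/
def HP (s : S) (n : ℕ) (a : ℕ → A) (u : ℕ → Set l) : Prop :=
  ∃ σ : ℕ → S, σ 0 = s ∧ FinRun Tr n σ a ∧ ∀ i ≤ n, L (σ i) = u i

/-- First-change index. -/
def FC (u : ℕ → Set l) (y : ℕ) : Prop := (∀ i ≤ y, u i = u 0) ∧ u (y + 1) ≠ u 0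

/-- labels after moving action `j` to the front -/
noncomputable def mv (j : ℕ) (a : ℕ → A) (u : ℕ → Set l) : ℕ → Set l :=
  if a j ∈ I then mvI j u else mvV j u

theorem HP.mono {s : S} {m n : ℕ} {a : ℕ → A} {u : ℕ → Set l} (h : HP Tr L s n a u)
    (hm : m ≤ n) : HP Tr L s m a u := by
  obtain ⟨σ, h0, h1, h2⟩ := h
  exact ⟨σ, h0, fun i hi => h1 i (by omega), fun i hi => h2 i (by omega)⟩

theorem HP.zero {s : S} {n : ℕ} {a : ℕ → A} {u : ℕ → Set l} (h : HP Tr L s n a u) :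
    L s = u 0 := by
  obtain ⟨σ, h0, h1, h2⟩ := h
  rw [← h0, h2 0 (by omega)]

theorem wf (hcondL : CondL Tr I r s0) (hfin : {s | RedReach Tr r s0 s}.Finite)
    (b : A) (hb : b ∉ I) :
    WellFounded (fun t s : S => b ∉ r s ∧ ∃ a, RedTr Tr r s0 s a t) := by
  rw [wellFounded_iff_isEmpty_descending_chain]
  constructor
  rintro ⟨f, hf⟩
  choose h1 α h2 using hf
  obtain ⟨m, n, hmn, he⟩ := Set.Finite.exists_lt_map_eq_of_forall_mem
    (f := f) (fun n => (h2 n).1) hfin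
  obtain ⟨i, _, hi⟩ := hcondL b hb (n - m) (fun i => f (m + i)) (fun i => α (m + i)) (by omega)
    (fun i _ => h2 (m + i)) (by simp [he, Nat.add_sub_cancel' hmn.le])
  exact h1 _ hi

theorem inv_const (hI : InvisibleSet Tr L I) (n : ℕ) (σ : ℕ → S) (a : ℕ → A)
    (h : FinRun Tr n σ a) (ha : ∀ i < n, a i ∈ I) (i : ℕ) (hi : i ≤ n) : L (σ i) = L (σ 0) := by
  induction i with
  | zero => rfl
  | succ i ih => rw [← ih (by omega)]; exact (hI _ (ha i (by omega)) _ _ (h i (by omega))).symm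

/-- Moving a stubborn action to the front. -/
theorem move (hI : InvisibleSet Tr L I) {s : S} (hD1 : CondD1' Tr I r s) (hV : CondV Tr I r s)
    {N j : ℕ} {a : ℕ → A} {u : ℕ → Set l} (h : HP Tr L s (N + 1) a u) (hj : j ≤ N)
    (haj : a j ∈ r s) (hlt : ∀ i < j, a i ∉ r s) :
    (∃ t, Tr s (a j) t ∧ HP Tr L t N (skip j a) (mv I j a u)) ∧
      (a j ∈ I → u j = u (j + 1)) ∧
      (a j ∉ I → (∀ i ≤ j, u i = u 0) ∧ ∀ b, b ∉ I → b ∈ r s) := by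
  obtain ⟨σ, h0, h1, h2⟩ := h
  obtain ⟨σ', h3, h4, h5, h6⟩ := hD1 (a j) haj j σ a (σ (j + 1)) h0
    (fun i hi => h1 i (by omega)) hlt (h1 j (by omega))
  have hvis : a j ∉ I → ∀ b, b ∉ I → b ∈ r s := fun hv => hV ⟨a j, haj, hv, _, h3⟩
  have hvis' : a j ∉ I → ∀ i < j, a i ∈ I := by
    intro hv i hi
    by_contra hc
    exact hlt i hi (hvis hv _ hc)
  refine ⟨⟨σ' 0, h3, fun i => if i ≤ j then σ' i else σ (i + 1), by simp, ?_, ?_⟩, ?_, ?_⟩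
  · intro i hi
    rcases lt_trichotomy i j with hij | rfl | hij
    · have e1 : i ≤ j := by omega
      have e2 : i + 1 ≤ j := by omega
      simpa [skip, hij, e1, e2] using h4 i hij
    · simpa [skip, h5] using h1 (i + 1) (by omega)
    · have e1 : ¬ i ≤ j := by omega
      have e2 : ¬ i + 1 ≤ j := by omega
      have e3 : ¬ i < j := by omega
      simpa only [skip, e1, e2, e3, if_false] using h1 (i + 1) (by omega)
  · intro i hi
    by_cases hij : i ≤ j
    · by_cases hv : a j ∈ I
      · simp only [mv, hv, mvI, hij, if_true]
        rw [← h2 i (by omega)]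
        rcases eq_or_lt_of_le hij with rfl | hij'
        · rw [h5]; exact (hI _ hv _ _ (h1 i (by omega))).symm
        · rcases Nat.eq_zero_or_pos i with rfl | hp
          · rw [h0]; exact (hI _ hv _ _ h3).symm
          · exact (hI _ hv _ _ (h6 hv i hp hij')).symm
      · simp only [mv, hv, mvV, hij, if_true, if_false]
        rw [← h2 (j + 1) (by omega), ← h5,
          inv_const Tr L I hI j σ' a h4 (hvis' hv) i hij,
          inv_const Tr L I hI j σ' a h4 (hvis' hv) j le_rfl]
    · have := h2 (i + 1) (by omega)
      by_cases hv : a j ∈ I <;> simpa [mv, hv, mvI, mvV, hij] using this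
  · intro hv
    rw [← h2 j (by omega), ← h2 (j + 1) (by omega)]
    exact hI _ hv _ _ (h1 j (by omega))
  · intro hv
    refine ⟨?_, hvis hv⟩
    intro i hi
    rw [← h2 i (by omega), ← h2 0 (by omega)]
    exact inv_const Tr L I hI j σ a (fun i hi => h1 i (by omega)) (hvis' hv) i hi

theorem exists_key {s : S} (hD2 : CondD2w Tr r s) (hV : CondV Tr I r s) (hC : CondI Tr I r s)
    {a : A} {t : S} (h : Tr s a t) (ha : a ∉ r s) :
    ∃ b ∈ r s, b ∈ I ∧ KeyAction Tr r s b := by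
  by_cases hv : a ∈ I
  · exact hC ⟨a, hv, t, h⟩
  · obtain ⟨b, hb, hk⟩ := hD2 ⟨a, t, h⟩
    refine ⟨b, hb, ?_, hk⟩
    by_contra hbv
    have hen := hk 0 (fun _ => s) (fun _ => b) rfl (fun i hi => by omega) (fun i hi => by omega)
    exact ha (hV ⟨b, hb, hbv, hen⟩ a hv)

/-- Inserting an invisible key action at the front. -/
theorem insert_key (hI : InvisibleSet Tr L I) {s : S} (hD1 : CondD1' Tr I r s)
    {b : A} (hb : b ∈ r s) (hbI : b ∈ I) (hk : KeyAction Tr r s b)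
    {N : ℕ} {a : ℕ → A} {u : ℕ → Set l} (h : HP Tr L s N a u) (hn : ∀ i < N, a i ∉ r s) :
    ∃ t, Tr s b t ∧ HP Tr L t N a u := by
  obtain ⟨σ, h0, h1, h2⟩ := h
  obtain ⟨t, ht⟩ := hk N σ a h0 h1 hn
  obtain ⟨σ', h3, h4, h5, h6⟩ := hD1 b hb N σ a t h0 h1 hn ht
  refine ⟨σ' 0, h3, σ', rfl, h4, ?_⟩
  intro i hi
  rw [← h2 i hi]
  rcases eq_or_lt_of_le hi with rfl | hij'
  · rw [h5]; exact (hI _ hbI _ _ ht).symm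
  · rcases Nat.eq_zero_or_pos i with rfl | hp
    · rw [h0]; exact (hI _ hbI _ _ h3).symm
    · exact (hI _ hbI _ _ (h6 hbI i hp hij')).symm

theorem D_mv (j : ℕ) (a : ℕ → A) (u : ℕ → Set l) (h1 : a j ∈ I → u j = u (j + 1))
    (h2 : a j ∉ I → ∀ i ≤ j, u i = u 0) (n : ℕ) (hn : j ≤ n) :
    F (u 0) (D (mv I j a u) n) = D u (n + 1) := by
  by_cases hv : a j ∈ I
  · simp only [mv, hv, if_true]
    rw [D_mvI_ge j u (h1 hv) n hn, F_D]
  · simp only [mv, hv, if_false]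
    exact D_mvV_ge j u (h2 hv) n hn

/-- `C1`, part A. -/
theorem D_mv_A (j : ℕ) (a : ℕ → A) (u : ℕ → Set l) (h1 : a j ∈ I → u j = u (j + 1))
    (h2 : a j ∉ I → ∀ i ≤ j, u i = u 0) (n : ℕ) :
    ∃ m, F (u 0) (D (mv I j a u) n) = D u m := by
  by_cases hn : j ≤ n
  · exact ⟨_, D_mv I j a u h1 h2 n hn⟩
  · by_cases hv : a j ∈ I
    · refine ⟨n, ?_⟩
      simp only [mv, hv, if_true]
      rw [D_congr (mvI j u) u n (fun i hi => by simp [mvI]; omega), F_D]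
    · refine ⟨j + 1, ?_⟩
      rw [← D_mv I j a u h1 h2 j le_rfl]
      simp only [mv, hv, if_false]
      rw [D_const (mvV j u) j (fun i hi => by simp [mvV, hi]),
        D_const (mvV j u) n (fun i hi => by simp [mvV]; omega)]

/-- `C1`, part B. -/
theorem D_mv_B (j : ℕ) (a : ℕ → A) (u : ℕ → Set l) (h1 : a j ∈ I → u j = u (j + 1))
    (h2 : a j ∉ I → ∀ i ≤ j, u i = u 0) (n : ℕ) :
    D u n = [u 0] ∨ ∃ m, D u n = F (u 0) (D (mv I j a u) m) := by
  by_cases hn : j + 1 ≤ n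
  · obtain ⟨k, rfl⟩ : ∃ k, n = k + 1 := ⟨n - 1, by omega⟩
    exact Or.inr ⟨k, (D_mv I j a u h1 h2 k (by omega)).symm⟩
  · by_cases hv : a j ∈ I
    · refine Or.inr ⟨n, ?_⟩
      simp only [mv, hv, if_true]
      rw [D_congr (mvI j u) u n (fun i hi => by simp [mvI]; omega), F_D]
    · exact Or.inl (D_const u n (fun i hi => h2 hv i (by omega)))

/-- Finite case. -/
theorem finite_case (hI : InvisibleSet Tr L I)
    (hs : ∀ s, CondD1' Tr I r s ∧ CondD2w Tr r s ∧ CondV Tr I r s ∧ CondI Tr I r s)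
    (hcondL : CondL Tr I r s0) (hfin : {s | RedReach Tr r s0 s}.Finite) (n : ℕ) :
    ∀ (s : S) (a : ℕ → A) (u : ℕ → Set l), RedReach Tr r s0 s → HP Tr L s n a u →
      ∃ (m : ℕ) (τ : ℕ → S) (β : ℕ → A), τ 0 = s ∧ FinRun (RedTr Tr r s0) m τ β ∧
        D (fun i => L (τ i)) m = D u n := by
  have hcons : ∀ (s t : S) (b : A) (x : List (Set l)), RedTr Tr r s0 s b t →
      (∃ (m : ℕ) (τ : ℕ → S) (β : ℕ → A), τ 0 = t ∧ FinRun (RedTr Tr r s0) m τ β ∧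
        D (fun i => L (τ i)) m = x) →
      (∃ (m : ℕ) (τ : ℕ → S) (β : ℕ → A), τ 0 = s ∧ FinRun (RedTr Tr r s0) m τ β ∧
        D (fun i => L (τ i)) m = F (L s) x) := by
    rintro s t b x hst ⟨m, τ, β, h0, h1, h2⟩
    refine ⟨m + 1, consS s τ, consS b β, rfl, ?_, ?_⟩
    · intro i hi
      cases i with
      | zero => simpa [consS, h0] using hst
      | succ i => exact h1 i (by omega)
    · rw [← h2, ← D_consS]
      congr 1
      funext i
      cases i <;> rfl
  induction n with
  | zero =>
    intro s a u hr h
    refine ⟨0, fun _ => s, a, rfl, fun i hi => by omega, ?_⟩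
    simp [D, h.zero]
  | succ n ih =>
    intro s a u hr h
    by_cases hvis : ∀ i < n + 1, a i ∈ I
    · refine ⟨0, fun _ => s, a, rfl, fun i hi => by omega, ?_⟩
      have hz := h.zero
      obtain ⟨σ, h0, h1, h2⟩ := h
      rw [D_const u]
      · simp [D, hz]
      · intro i hi
        rw [← h2 i hi, ← h2 0 (by omega)]
        exact inv_const Tr L I hI _ σ a h1 hvis i hi
    · push Not at hvis
      obtain ⟨v, hv, hvI⟩ := hvis
      induction s using (wf Tr s0 I r hcondL hfin (a v) hvI).induction with
      | _ s ihs =>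
      by_cases hex : ∃ j, j < n + 1 ∧ a j ∈ r s
      · have hj := Nat.find_spec hex
        have hmin : ∀ i < Nat.find hex, a i ∉ r s := fun i hi hc =>
          Nat.find_min hex hi ⟨by omega, hc⟩
        generalize Nat.find hex = j at hj hmin
        obtain ⟨⟨t, ht, hP⟩, hA, hB⟩ := move Tr L I r hI (hs s).1 (hs s).2.2.1 h
          (Nat.lt_succ_iff.1 hj.1) hj.2 hmin
        have := hcons s t (a j) _ ⟨hr, hj.2, ht⟩ (ih t _ _ (hr.step hj.2 ht) hP)
        rw [h.zero, D_mv I j a u hA (fun h => (hB h).1) n (by omega)] at this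
        exact this
      · push Not at hex
        obtain ⟨σ, h0, h1, h2⟩ := id h
        obtain ⟨b, hb, hbI, hk⟩ := exists_key Tr I r (hs s).2.1 (hs s).2.2.1 (hs s).2.2.2
          (h0 ▸ h1 0 (by omega)) (hex 0 (by omega))
        obtain ⟨t, ht, hP⟩ := insert_key Tr L I r hI (hs s).1 hb hbI hk h hex
        have := hcons s t b _ ⟨hr, hb, ht⟩
          (ihs t ⟨hex v hv, b, hr, hb, ht⟩ (hr.step hb ht) hP)
        rw [h.zero, F_D] at this
        exact this

theorem pigeon {F' : Set S} (hF : F'.Finite) (Q : S → ℕ → Prop)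
    (hmono : ∀ s m n, m ≤ n → Q s n → Q s m) (h : ∀ n, ∃ t ∈ F', Q t n) :
    ∃ t ∈ F', ∀ n, Q t n := by
  by_contra hc
  push Not at hc
  choose! f hf using hc
  obtain ⟨t, ht, hQ⟩ := h (hF.toFinset.sup f)
  exact hf t ht (hmono t _ _ (Finset.le_sup (hF.mem_toFinset.2 ht)) hQ)

/-- One step in the infinite case. -/
theorem inf_step (hI : InvisibleSet Tr L I)
    (hs : ∀ s, CondD1' Tr I r s ∧ CondD2w Tr r s ∧ CondV Tr I r s ∧ CondI Tr I r s)
    (hfin : {s | RedReach Tr r s0 s}.Finite)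
    (s : S) (a : ℕ → A) (u : ℕ → Set l) (hr : RedReach Tr r s0 s)
    (h : ∀ n, HP Tr L s n a u) :
    ∃ (t : S) (a' : ℕ → A) (u' : ℕ → Set l), RedReach Tr r s0 t ∧ (∀ n, HP Tr L t n a' u') ∧
      (∃ b, RedTr Tr r s0 s b t) ∧
      (∀ n, ∃ m, F (u 0) (D u' n) = D u m) ∧
      (∀ n, D u n = [u 0] ∨ ∃ m, D u n = F (u 0) (D u' m)) ∧
      (∀ y, FC u y → u' 0 ≠ u 0 ∨ (∃ y' < y, FC u' y') ∨
        (FC u' y ∧ a' y = a y ∧ a y ∉ r s)) := by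
  by_cases hex : ∃ j, a j ∈ r s
  · have hj := Nat.find_spec hex
    have hmin : ∀ i < Nat.find hex, a i ∉ r s := fun i hi => Nat.find_min hex hi
    generalize Nat.find hex = j at hj hmin
    have hm := fun n (hn : j ≤ n) => move Tr L I r hI (hs s).1 (hs s).2.2.1 (h (n + 1))
          hn hj hmin
    obtain ⟨_, hA, hB⟩ := hm j le_rfl
    obtain ⟨t, ⟨ht1, ht2⟩, ht3⟩ := pigeon (F' := {t | RedReach Tr r s0 t ∧ Tr s (a j) t})
      (hfin.subset (fun t ht => ht.1)) (fun t n => HP Tr L t n (skip j a) (mv I j a u))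
      (fun t m n hmn hq => hq.mono Tr L hmn)
      (fun n => by
        obtain ⟨⟨t, ht, hP⟩, _⟩ := hm (max j n) (le_max_left _ _)
        exact ⟨t, ⟨hr.step hj ht, ht⟩, hP.mono Tr L (le_max_right _ _)⟩)
    refine ⟨t, skip j a, mv I j a u, ht1, ht3, ⟨a j, hr, hj, ht2⟩,
      D_mv_A I j a u hA (fun h => (hB h).1), D_mv_B I j a u hA (fun h => (hB h).1), ?_⟩
    rintro y ⟨hy1, hy2⟩
    have hyI : a y ∉ I := by
      intro hc
      obtain ⟨σ, h0, h1, h2⟩ := h (y + 1)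
      apply hy2
      rw [← hy1 y le_rfl, ← h2 (y + 1) le_rfl, ← h2 y (by omega)]
      exact (hI _ hc _ _ (h1 y (by omega))).symm
    by_cases hv : a j ∈ I
    · simp only [mv, hv, if_true]
      have hjy : j ≠ y := by rintro rfl; exact hyI hv
      right
      rcases lt_or_gt_of_ne hjy with hlt | hgt
      · left
        refine ⟨y - 1, by omega, ?_, ?_⟩
        · intro i hi
          have : mvI j u 0 = u 0 := by simp [mvI]
          rw [this]
          by_cases hij : i ≤ j
          · simp only [mvI, hij, if_true]; exact hy1 i (by omega)
          · simp only [mvI, hij, if_false]; exact hy1 (i + 1) (by omega)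
        · have e : y - 1 + 1 = y := by omega
          have e2 : ¬ y ≤ j := by omega
          rw [e]
          simpa [mvI, e2] using hy2
      · right
        refine ⟨⟨?_, ?_⟩, ?_, hmin y hgt⟩
        · intro i hi
          have e : i ≤ j := by omega
          simpa [mvI, e] using hy1 i hi
        · have e : y + 1 ≤ j := by omega
          simpa [mvI, e] using hy2
        · simp [skip, hgt]
    · simp only [mv, hv, if_false]
      obtain ⟨hB1, hB2⟩ := hB hv
      have hjy : j ≤ y := by
        by_contra hc
        exact hmin y (by omega) (hB2 _ hyI)
      rcases eq_or_lt_of_le hjy with rfl | hlt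
      · left; simpa [mvV] using hy2
      · right; left
        refine ⟨y - 1, by omega, ?_, ?_⟩
        · intro i hi
          have : mvV j u 0 = u 0 := by simpa [mvV] using hy1 (j + 1) (by omega)
          rw [this]
          by_cases hij : i ≤ j
          · simp only [mvV, hij, if_true]; exact hy1 (j + 1) (by omega)
          · simp only [mvV, hij, if_false]; exact hy1 (i + 1) (by omega)
        · have : mvV j u 0 = u 0 := by simpa [mvV] using hy1 (j + 1) (by omega)
          rw [this]
          have e : y - 1 + 1 = y := by omega
          have e2 : ¬ y ≤ j := by omega
          rw [e]
          simpa [mvV, e2] using hy2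
  · push Not at hex
    obtain ⟨σ, h0, h1, h2⟩ := h 1
    obtain ⟨b, hb, hbI, hk⟩ := exists_key Tr I r (hs s).2.1 (hs s).2.2.1 (hs s).2.2.2
          (h0 ▸ h1 0 (by omega)) (hex 0)
    obtain ⟨t, ⟨ht1, ht2⟩, ht3⟩ := pigeon (F' := {t | RedReach Tr r s0 t ∧ Tr s b t})
      (hfin.subset (fun t ht => ht.1)) (fun t n => HP Tr L t n a u)
      (fun t m n hmn hq => hq.mono Tr L hmn)
      (fun n => by
        obtain ⟨t, ht, hP⟩ := insert_key Tr L I r hI (hs s).1 hb hbI hk (h n) (fun i _ => hex i)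
        exact ⟨t, ⟨hr.step hb ht, ht⟩, hP⟩)
    refine ⟨t, a, u, ht1, ht3, ⟨b, hr, hb, ht2⟩, fun n => ⟨n, F_D u n⟩,
      fun n => Or.inr ⟨n, (F_D u n).symm⟩, fun y hy => Or.inr (Or.inr ⟨hy, rfl, hex y⟩)⟩

/-- Infinite case. -/
theorem infinite_case (hI : InvisibleSet Tr L I)
    (hs : ∀ s, CondD1' Tr I r s ∧ CondD2w Tr r s ∧ CondV Tr I r s ∧ CondI Tr I r s)
    (hcondL : CondL Tr I r s0) (hfin : {s | RedReach Tr r s0 s}.Finite)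
    (a : ℕ → A) (u : ℕ → Set l) (h : ∀ n, HP Tr L s0 n a u) :
    ∃ (τ : ℕ → S) (β : ℕ → A), τ 0 = s0 ∧ (∀ i, RedTr Tr r s0 (τ i) (β i) (τ (i + 1))) ∧
      (∀ n, ∃ m, D (fun i => L (τ i)) n = D u m) ∧
      (∀ n, ∃ m, D u n = D (fun i => L (τ i)) m) := by
  let X := {x : S × (ℕ → A) × (ℕ → Set l) //
    RedReach Tr r s0 x.1 ∧ ∀ n, HP Tr L x.1 n x.2.1 x.2.2}
  have hstep : ∀ x : X, ∃ x' : X,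
      (∃ b, RedTr Tr r s0 x.1.1 b x'.1.1) ∧
      (∀ n, ∃ m, F (x.1.2.2 0) (D x'.1.2.2 n) = D x.1.2.2 m) ∧
      (∀ n, D x.1.2.2 n = [x.1.2.2 0] ∨ ∃ m, D x.1.2.2 n = F (x.1.2.2 0) (D x'.1.2.2 m)) ∧
      (∀ y, FC x.1.2.2 y → x'.1.2.2 0 ≠ x.1.2.2 0 ∨ (∃ y' < y, FC x'.1.2.2 y') ∨
        (FC x'.1.2.2 y ∧ x'.1.2.1 y = x.1.2.1 y ∧ x.1.2.1 y ∉ r x.1.1)) := by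
    rintro ⟨⟨s, a, u⟩, hr, h⟩
    obtain ⟨t, a', u', h1, h2, h3⟩ := inf_step Tr s0 L I r hI hs hfin s a u hr h
    exact ⟨⟨⟨t, a', u'⟩, h1, h2⟩, h3⟩
  choose nx hb hA hB hC using hstep
  let x : ℕ → X := fun i => nx^[i] ⟨⟨s0, a, u⟩, RedReach.refl, h⟩
  have hx : ∀ i, x (i + 1) = nx (x i) := fun i => Function.iterate_succ_apply' _ _ _
  let lam : ℕ → Set l := fun i => L (x i).1.1
  have hl : ∀ i, (x i).1.2.2 0 = lam i := fun i => ((x i).2.2 0).zero.symm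
  choose β hβ using fun i => hb (x i)
  have hD : ∀ i n, D (fun k => lam (i + k)) (n + 1) = F (lam i) (D (fun k => lam (i + 1 + k)) n) := by
    intro i n
    rw [← D_consS]
    apply D_congr
    intro k _
    cases k with
    | zero => rfl
    | succ k => simp only [consS]; congr 1; omega
  have dir1 : ∀ n i, ∃ m, D (fun k => lam (i + k)) n = D (x i).1.2.2 m := by
    intro n
    induction n with
    | zero => intro i; exact ⟨0, by simp [D, hl]⟩
    | succ n ih =>
      intro i
      obtain ⟨m, hm⟩ := ih (i + 1)
      obtain ⟨m', hm'⟩ := hA (x i) m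
      refine ⟨m', ?_⟩
      rw [hD, hm, hx, ← hl, hm']
  have progress : ∀ y, ∀ i, FC (x i).1.2.2 y → ∃ d, lam (i + d) ≠ lam i := by
    intro y
    induction y using Nat.strong_induction_on with
    | _ y ih =>
    have hstep2 : ∀ b, b ∉ I → ∀ s i, (x i).1.1 = s → (x i).1.2.1 y = b → FC (x i).1.2.2 y →
        ∃ d, lam (i + d) ≠ lam i := by
      intro b hbI s
      induction s using (wf Tr s0 I r hcondL hfin b hbI).induction with
      | _ s ihs =>
      intro i hsi hbi hfc
      by_cases hne : lam (i + 1) = lam i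
      · have key : ∃ d, lam (i + 1 + d) ≠ lam (i + 1) := by
          rcases hC (x i) y hfc with h1 | ⟨y', hy', h1⟩ | ⟨h1, h2, h3⟩
          · rw [← hx, hl, hl] at h1
            exact absurd hne h1
          · rw [← hx] at h1
            exact ih y' hy' (i + 1) h1
          · rw [← hx] at h1 h2
            refine ihs (x (i + 1)).1.1 ⟨?_, ?_⟩ (i + 1) rfl (h2.trans hbi) h1
            · rw [← hbi, ← hsi]; exact h3
            · rw [← hsi, hx]; exact hb (x i)
        obtain ⟨d, hd⟩ := key
        refine ⟨1 + d, ?_⟩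
        rw [← hne, ← add_assoc]; exact hd
      · exact ⟨1, hne⟩
    intro i hfc
    refine hstep2 _ ?_ _ i rfl rfl hfc
    intro hc
    obtain ⟨σ, h0, h1, h2⟩ := (x i).2.2 (y + 1)
    apply hfc.2
    rw [← hfc.1 y le_rfl, ← h2 (y + 1) le_rfl, ← h2 y (by omega)]
    exact (hI _ hc _ _ (h1 y (by omega))).symm
  have dir2 : ∀ K, ∀ i n, (D (x i).1.2.2 n).length ≤ K →
      ∃ m, D (x i).1.2.2 n = D (fun k => lam (i + k)) m := by
    intro K
    induction K with
    | zero =>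
      intro i n hn
      exact absurd (List.length_eq_zero_iff.1 (Nat.le_zero.1 hn)) (D_ne _ _)
    | succ K ih =>
      have inner : ∀ d i, lam (i + d) ≠ lam i → ∀ n, (D (x i).1.2.2 n).length ≤ K + 1 →
          ∃ m, D (x i).1.2.2 n = D (fun k => lam (i + k)) m := by
        intro d
        induction d with
        | zero => intro i hi; exact absurd rfl hi
        | succ d ihd =>
          intro i hi n hn
          rcases hB (x i) n with h1 | ⟨m, h1⟩
          · exact ⟨0, by rw [h1, hl]; simp [D]⟩
          · rw [← hx, hl] at h1
            have : ∃ m', D (x (i + 1)).1.2.2 m = D (fun k => lam (i + 1 + k)) m' := by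
              by_cases hne : lam (i + 1) = lam i
              · have hF : F (lam i) (D (x (i + 1)).1.2.2 m) = D (x (i + 1)).1.2.2 m := by
                  rw [← hne, ← hl, F_D]
                rw [hF] at h1
                rw [h1] at hn
                refine ihd (i + 1) ?_ m hn
                rw [hne]
                convert hi using 2
                omega
              · apply ih
                rw [h1, F, D_head, hl, if_neg (by simpa using hne)] at hn
                simpa using hn
            obtain ⟨m', hm'⟩ := this
            exact ⟨m' + 1, by rw [hD, h1, hm']⟩
      intro i n hn
      by_cases hconst : ∀ k ≤ n, (x i).1.2.2 k = (x i).1.2.2 0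
      · exact ⟨0, by rw [D_const _ _ hconst, hl]; simp [D]⟩
      · push Not at hconst
        have hex : ∃ k, (x i).1.2.2 k ≠ (x i).1.2.2 0 := by
          obtain ⟨k, _, hk⟩ := hconst; exact ⟨k, hk⟩
        have hspec := Nat.find_spec hex
        have hmin : ∀ k < Nat.find hex, (x i).1.2.2 k = (x i).1.2.2 0 := fun k hk => by
          have := Nat.find_min hex hk
          exact not_not.1 this
        generalize Nat.find hex = z at hspec hmin
        cases z with
        | zero => exact absurd rfl hspec
        | succ y =>
          obtain ⟨d, hd⟩ := progress y i ⟨fun k hk => hmin k (by omega), hspec⟩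
          exact inner d i hd n hn
  refine ⟨fun i => (x i).1.1, β, rfl, ?_, ?_, ?_⟩
  · intro i
    have := hβ i
    rw [← hx] at this
    exact this
  · intro n
    obtain ⟨m, hm⟩ := dir1 n 0
    refine ⟨m, ?_⟩
    rw [← show (x 0).1.2.2 = u from rfl, ← hm]
    simp [lam]
  · intro n
    obtain ⟨m, hm⟩ := dir2 _ 0 n le_rfl
    refine ⟨m, ?_⟩
    rw [← show (x 0).1.2.2 = u from rfl, hm]
    simp [lam]

end

end StubAux

/-- Given an LSTS `TS` and a weak or strong stubborn set `r` in which
condition D1 is replaced by the strengthened condition D1', and whose reduced LSTS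
`TS_r` has finitely many states, the reduced LSTS `TS_r` is stutter-trace equivalent
to `TS`. -/
theorem stubborn_sets_with_D1'_preserve_stutter_trace_equivalence
    {S A l : Type*} (Tr : S → A → S → Prop) (s0 : S) (L : S → Set l) (I : Set A)
    (hI : InvisibleSet Tr L I) (r : S → Set A)
    (hstub :
      (∀ s, CondD1' Tr I r s ∧ CondD2w Tr r s ∧ CondV Tr I r s ∧ CondI Tr I r s) ∨
      (∀ s, CondD0 Tr r s ∧ CondD1' Tr I r s ∧ CondD2 Tr r s ∧ CondV Tr I r s ∧
        CondI Tr I r s))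
    (hcondL : CondL Tr I r s0)
    (hfin : {s | RedReach Tr r s0 s}.Finite) :
    StutterTraceEquiv (RedTr Tr r s0) s0 L Tr s0 L := by
  have hs : ∀ s, CondD1' Tr I r s ∧ CondD2w Tr r s ∧ CondV Tr I r s ∧ CondI Tr I r s := by
    rcases hstub with h | h
    · exact h
    · intro s
      obtain ⟨h0, h1, h2, h3, h4⟩ := h s
      refine ⟨h1, ?_, h3, h4⟩
      intro hen
      obtain ⟨a, ha, hae⟩ := h0 hen
      exact ⟨a, ha, h2 a ha hae⟩
  constructor
  · intro p hp
    exact ⟨⟨p.states, p.acts, p.len, fun i hi => (p.valid i hi).2.2⟩, hp, Iff.rfl, rfl⟩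
  · intro q hq
    by_cases hlen : q.len = ⊤
    · obtain ⟨τ, β, h0, h1, h2, h3⟩ := StubAux.infinite_case Tr s0 L I r hI hs hcondL hfin
        q.acts (fun i => L (q.states i))
        (fun n => ⟨q.states, hq, fun i _ => q.valid i (by rw [hlen]; exact ENat.natCast_lt_top i),
          fun _ _ => rfl⟩)
      refine ⟨⟨τ, β, ⊤, fun i _ => h1 i⟩, h0, by simp [hlen], ?_⟩
      funext k
      apply Option.ext
      intro x
      rw [StubAux.nsTrace_iff, StubAux.nsTrace_iff]
      simp only [hlen, le_top, true_and]
      constructor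
      · rintro ⟨i, hi⟩
        obtain ⟨m, hm⟩ := h2 i
        exact ⟨m, by rw [← hm]; exact hi⟩
      · rintro ⟨i, hi⟩
        obtain ⟨m, hm⟩ := h3 i
        exact ⟨m, by rw [← hm]; exact hi⟩
    · obtain ⟨n, hn⟩ := ENat.ne_top_iff_exists.1 hlen
      obtain ⟨m, τ, β, h0, h1, h2⟩ := StubAux.finite_case Tr s0 L I r hI hs hcondL hfin n s0
        q.acts (fun i => L (q.states i)) RedReach.refl
        ⟨q.states, hq, fun i hi => q.valid i (by rw [← hn]; exact_mod_cast hi), fun _ _ => rfl⟩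
      refine ⟨⟨τ, β, m, fun i hi => h1 i (by exact_mod_cast hi)⟩, h0, by simp [← hn], ?_⟩
      have aux : ∀ (u : ℕ → Set l) (n k : ℕ) (x : Set l),
          (∃ i : ℕ, (i : ℕ∞) ≤ (n : ℕ∞) ∧ (StubAux.D u i)[k]? = some x) ↔
            (StubAux.D u n)[k]? = some x := by
        intro u n k x
        constructor
        · rintro ⟨i, hi, h⟩
          obtain ⟨z, hz⟩ := StubAux.D_prefix u (Nat.cast_le.1 hi)
          obtain ⟨hk, _⟩ := List.getElem?_eq_some_iff.1 h
          rw [← hz, List.getElem?_append_left hk, h]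
        · intro h
          exact ⟨n, le_rfl, h⟩
      funext k
      apply Option.ext
      intro x
      rw [StubAux.nsTrace_iff, StubAux.nsTrace_iff]
      simp only [← hn]
      rw [aux, aux, h2]
end

section
/- For deterministic LSTSs, conditions D1 and D2 together imply condition D1': if an LSTS is deterministic and a reduction function r satisfies D1 and D2 at every state, then r satisfies D1' at every state. -/
open scoped Classical

/-- For deterministic LSTSs, conditions D1 and D2 together imply condition
D1': if an LSTS is deterministic and a reduction function `r` satisfies D1 and D2 at
every state, then `r` satisfies D1' at every state. -/
theorem deterministic_D1_D2_implies_D1' {S A : Type*} (Tr : S → A → S → Prop)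
    (I : Set A) (r : S → Set A)
    (hdet : ∀ s a t t', Tr s a t → Tr s a t' → t = t')
    (hD1 : ∀ s, CondD1 Tr r s) (hD2 : ∀ s, CondD2 Tr r s) :
    ∀ s, CondD1' Tr I r s := by
  intro s a ha n σ α sn' h0 hrun hα hlast
  obtain ⟨σ', h1, h2, h3⟩ := hD1 s a ha n σ α sn' h0 hrun hα hlast
  refine ⟨σ', h1, h2, h3, fun _ i _ hin => ?_⟩
  have hruni : FinRun Tr i σ α := fun j hj => hrun j (hj.trans hin)
  have hαi : ∀ j < i, α j ∉ r s := fun j hj => hα j (hj.trans hin)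
  obtain ⟨t, ht⟩ := hD2 s a ha ⟨_, h1⟩ i σ α h0 hruni hαi
  obtain ⟨τ, g1, g2, g3⟩ := hD1 s a ha i σ α t h0 hruni hαi ht
  have key : ∀ j, j ≤ i → τ j = σ' j := by
    intro j
    induction j with
    | zero => intro _; exact hdet _ _ _ _ g1 h1
    | succ k ih =>
      intro hk
      have e := ih (by omega)
      have u := g2 k (by omega)
      rw [e] at u
      exact hdet _ _ _ _ u (h2 k (by omega))
  rw [← key i le_rfl, g3]
  exact ht
end

section
/- Let TS be an LSTS and r a reduction function that satisfies either D0, D1, D2, V and L at every state, or D1, D2w, V and L at every state, and suppose the reduced LSTS TS_r has finitely many states. Then for every labelling l ⊆ AP: TS contains an initial path to a state s with L(s) = l if and only if TS_r contains an initial path to a state s' with L(s') = l. -/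
open scoped Classical

theorem reach_run {S A : Type*} {Tr : S → A → S → Prop} {s0 s : S} (h : Reach Tr s0 s) :
    s = s0 ∨ ∃ (n : ℕ) (σ : ℕ → S) (α : ℕ → A), σ 0 = s0 ∧ FinRun Tr n σ α ∧ σ n = s := by
  induction h with
  | refl => exact Or.inl rfl
  | @step s a t _ hst ih =>
    right
    rcases ih with rfl | ⟨n, σ, α, h0, hr, hn⟩
    · refine ⟨1, fun i => if i = 0 then s else t, fun _ => a, by simp, ?_, by simp⟩
      intro i hi
      obtain rfl : i = 0 := by omega
      simpa using hst
    · refine ⟨n + 1, fun i => if i ≤ n then σ i else t, fun i => if i < n then α i else a,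
        by simpa using h0, ?_, by simp⟩
      intro i hi
      by_cases h : i < n
      · simpa [h, h.le, Nat.succ_le_of_lt h] using hr i h
      · obtain rfl : i = n := by omega
        simpa [hn] using hst

theorem run_label {S A l : Type*} {Tr : S → A → S → Prop} {L : S → Set l} {I : Set A}
    (hI : InvisibleSet Tr L I) {σ : ℕ → S} {α : ℕ → A} :
    ∀ n, FinRun Tr n σ α → (∀ i < n, α i ∈ I) → L (σ 0) = L (σ n) := by
  intro n
  induction n with
  | zero => intros; rfl
  | succ n ih =>
    intro hr hv
    rw [ih (fun i hi => hr i (by omega)) (fun i hi => hv i (by omega))]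
    exact hI _ (hv n (by omega)) _ _ (hr n (by omega))

theorem run_main {S A l : Type*} (Tr : S → A → S → Prop)
    (s0 : S) (L : S → Set l) (I : Set A) (hI : InvisibleSet Tr L I) (r : S → Set A)
    (hc : ∀ s, CondD1 Tr r s ∧ CondD2w Tr r s ∧ CondV Tr I r s)
    (hcondL : CondL Tr I r s0)
    (hfin : {s | RedReach Tr r s0 s}.Finite) (lab : Set l)
    (hno : ∀ s, RedReach Tr r s0 s → L s ≠ lab) :
    ∀ (n : ℕ) (σ : ℕ → S) (α : ℕ → A), RedReach Tr r s0 (σ 0) → FinRun Tr n σ α →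
      L (σ n) ≠ lab := by
  intro n
  induction n with
  | zero => intro σ α h _; exact hno _ h
  | succ n ih =>
    intro σ α hred hrun hlab
    by_cases hvis : ∀ i < n + 1, α i ∈ I
    · exact hno _ hred ((run_label hI _ hrun hvis).trans hlab)
    push Not at hvis
    obtain ⟨k, hk, hkI⟩ := hvis
    let P : S → Prop := fun s => RedReach Tr r s0 s ∧
      ∃ τ : ℕ → S, τ 0 = s ∧ FinRun Tr (n + 1) τ α ∧ L (τ (n + 1)) = lab
    have hnot : ∀ s, P s → ∀ i < n + 1, α i ∉ r s := by
      rintro s ⟨hs, τ, h0, hτ, hl⟩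
      by_contra! hex
      obtain ⟨m, hm, hmin⟩ : ∃ m, (m < n + 1 ∧ α m ∈ r s) ∧
          ∀ i < m, ¬ (i < n + 1 ∧ α i ∈ r s) :=
        ⟨Nat.find hex, Nat.find_spec hex, fun i hi => Nat.find_min hex hi⟩
      obtain ⟨hmn, hmr⟩ := hm
      obtain ⟨σ', h1, h2, h3⟩ := (hc s).1 (α m) hmr m τ α (τ (m + 1)) h0
        (fun i hi => hτ i (by omega))
        (fun i hi hh => hmin i hi ⟨by omega, hh⟩) (hτ m hmn)
      refine ih (fun i => if i ≤ m then σ' i else τ (i + 1))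
        (fun i => if i < m then α i else α (i + 1)) ?_ ?_ ?_
      · simpa using RedReach.step hs hmr h1
      · intro i hi
        by_cases h : i < m
        · simpa [h, h.le, Nat.succ_le_of_lt h] using h2 i h
        · have h5 := hτ (i + 1) (by omega)
          by_cases h4 : i = m
          · subst h4
            simpa [h3] using h5
          · have : ¬ i ≤ m := by omega
            have h6 : ¬ i + 1 ≤ m := by omega
            simpa [h, this, h6] using h5
      · by_cases h : n ≤ m
        · obtain rfl : n = m := by omega
          simpa [h3] using hl
        · simpa [h] using hl
    have hstep : ∀ s, P s → ∃ a t, RedTr Tr r s0 s a t ∧ P t := by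
      intro s hP
      have hn := hnot s hP
      obtain ⟨hs, τ, h0, hτ, hl⟩ := hP
      obtain ⟨a, har, hkey⟩ := (hc s).2.1 ⟨α 0, τ 1, h0 ▸ hτ 0 (by omega)⟩
      have hen : ∃ t, Tr s a t := by
        have := hkey 0 τ α h0 (fun i hi => absurd hi (by omega)) (fun i hi => absurd hi (by omega))
        rwa [h0] at this
      have haI : a ∈ I := by
        by_contra haI
        exact hn k hk ((hc s).2.2 ⟨a, har, haI, hen⟩ _ hkI)
      obtain ⟨u, hu⟩ := hkey (n + 1) τ α h0 hτ hn
      obtain ⟨σ', h1, h2, h3⟩ := (hc s).1 a har (n + 1) τ α u h0 hτ hn hu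
      exact ⟨a, σ' 0, ⟨hs, har, h1⟩, RedReach.step hs har h1, σ', rfl, h2,
        by rw [h3, ← hI a haI _ _ hu, hl]⟩
    haveI : Nonempty A := ⟨α 0⟩
    haveI : Nonempty S := ⟨σ 0⟩
    choose! act nxt hRT hPn using hstep
    let ρ : ℕ → S := fun i => nxt^[i] (σ 0)
    have hρs : ∀ i, ρ (i + 1) = nxt (ρ i) := fun i => Function.iterate_succ_apply' _ _ _
    have hρ : ∀ i, P (ρ i) := by
      intro i
      induction i with
      | zero => exact ⟨hred, σ, rfl, hrun, hlab⟩
      | succ i ih2 => rw [hρs]; exact hPn _ ih2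
    have hcyc : ∃ i j, i < j ∧ ρ i = ρ j := by
      obtain ⟨i, -, j, -, hij, he⟩ := Set.infinite_univ.exists_ne_map_eq_of_mapsTo
        (f := ρ) (fun i _ => (hρ i).1) hfin
      rcases lt_or_gt_of_ne hij with h | h
      · exact ⟨i, j, h, he⟩
      · exact ⟨j, i, h, he.symm⟩
    obtain ⟨i, j, hij, he⟩ := hcyc
    obtain ⟨m, -, hm⟩ := hcondL (α k) hkI (j - i) (fun q => ρ (i + q)) (fun q => act (ρ (i + q)))
      (by omega)
      (fun q _ => by
        have := hRT _ (hρ (i + q))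
        rw [← hρs] at this
        exact this)
      (by
        have : i + (j - i) = j := by omega
        simp [this, he])
    exact hnot _ (hρ (i + m)) k hk hm

/-- Let `TS` be an LSTS and `r` a reduction function that satisfies either
D0, D1, D2, V and L at every state, or D1, D2w, V and L at every state, and suppose the
reduced LSTS `TS_r` has finitely many states.  Then for every labelling `lab ⊆ AP`:
`TS` contains an initial path to a state `s` with `L s = lab` iff `TS_r` contains an
initial path to a state `s'` with `L s' = lab`. -/
theorem stubborn_sets_preserve_reachability {S A l : Type*} (Tr : S → A → S → Prop)
    (s0 : S) (L : S → Set l) (I : Set A) (hI : InvisibleSet Tr L I) (r : S → Set A)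
    (hconds :
      (∀ s, CondD0 Tr r s ∧ CondD1 Tr r s ∧ CondD2 Tr r s ∧ CondV Tr I r s) ∨
      (∀ s, CondD1 Tr r s ∧ CondD2w Tr r s ∧ CondV Tr I r s))
    (hcondL : CondL Tr I r s0)
    (hfin : {s | RedReach Tr r s0 s}.Finite) :
    ∀ lab : Set l, (∃ s, Reach Tr s0 s ∧ L s = lab) ↔
      (∃ s', RedReach Tr r s0 s' ∧ L s' = lab) := by
  have hc : ∀ s, CondD1 Tr r s ∧ CondD2w Tr r s ∧ CondV Tr I r s := by
    rcases hconds with h | h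
    · intro s
      obtain ⟨d0, d1, d2, v⟩ := h s
      refine ⟨d1, fun he => ?_, v⟩
      obtain ⟨a, ha, ht⟩ := d0 he
      exact ⟨a, ha, d2 a ha ht⟩
    · exact h
  intro lab
  constructor
  · rintro ⟨s, hs, hl⟩
    by_contra! hno
    rcases reach_run hs with rfl | ⟨n, σ, α, h0, hr, hn⟩
    · exact hno _ RedReach.refl hl
    · exact run_main Tr s0 L I hI r hc hcondL hfin lab hno n σ α
        (h0 ▸ RedReach.refl) hr (hn ▸ hl)
  · rintro ⟨s, hs, hl⟩
    refine ⟨s, ?_, hl⟩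
    clear hl
    induction hs with
    | refl => exact Reach.refl
    | step _ _ ht ih => exact Reach.step ih ht
end

section
/- Conditions D2w and C4 together imply conditions D0 and D2: if a reduction function r on an LSTS satisfies D2w and C4 at a state s, then it satisfies D0 and D2 at s. -/
open scoped Classical

/-- Conditions D2w and C4 together imply conditions D0 and D2: if a
reduction function `r` on an LSTS satisfies D2w and C4 at a state `s`, then it satisfies
D0 and D2 at `s`. -/
theorem D2w_C4_implies_D0_D2 {S A : Type*} (Tr : S → A → S → Prop) (r : S → Set A)
    (s : S) (hD2w : CondD2w Tr r s) (hC4 : CondC4 Tr r s) :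
    CondD0 Tr r s ∧ CondD2 Tr r s := by
  have key : ∀ a, KeyAction Tr r s a → ∃ t, Tr s a t := fun a h =>
    h 0 (fun _ => s) (fun _ => a) rfl (fun i hi => absurd hi (Nat.not_lt_zero i))
      (fun i hi => absurd hi (Nat.not_lt_zero i))
  refine ⟨fun h => ?_, fun a ha hen => ?_⟩
  · obtain ⟨a, ha, hk⟩ := hD2w h
    exact ⟨a, ha, key a hk⟩
  · rcases hC4 with hC | hC
    · intro n σ α h0 hrun hnot
      rcases Nat.eq_zero_or_pos n with rfl | hn
      · rw [h0]
        exact hen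
      · exact absurd (by rw [hC]; trivial) (hnot 0 hn)
    · obtain ⟨b, hb, hk⟩ := hD2w ⟨a, hen⟩
      have hab : a = b := hC.unique ⟨ha, hen⟩ ⟨hb, key b hk⟩
      rw [hab]
      exact hk
end
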